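/- arXiv:1608.04684 — 2 statements merged into one kernel-verified Lean document; each statement's English description precedes it below -/
import Mathlib

section
/- Let α ∈ ℝ, R > 0 and N ≥ 1. Then for every Ψ ∈ C_c^∞((ℝ²)^N; ℂ) that is symmetric under permutations of the N particle coordinates, Σ_{j=1}^N ∫_{(ℝ²)^N} |D_jΨ(x)|² dx ≥ 2π|α| · Σ_{j≠k} ∫_{(ℝ²)^N} (πR²)^{-1} 1_{B_R(0)}(x_j − x_k) |Ψ(x)|² dx, where the sum on the right is over ordered pairs j ≠ k. (Short-range magnetic interaction, Lemma 1.1.) -/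
/-! The bound holds particle by particle (`one_particle`). For `s = ± 1`,
expanding `‖D₀Ψ + s i D₁Ψ‖² ≥ 0` (`cross_term_le`) bounds `|D_jΨ|²` below by a cross term with two
parts. One is twice the Jacobian `∂₀u ∂₁v - ∂₁u ∂₀v` of `Ψ = u + iv`, whose integral vanishes
(`integral_fderiv_mul_fderiv`). The other is `αA_j ∧ ∇|Ψ|²` up to sign; after integration by parts
it becomes the magnetic field `curl αA_j` against `|Ψ|²`. Since `A_j` is a sum of rotated fields
`z / |z|_R²`, its curl is a sum of divergences, each equal to `2 / R²` on the disk and `0` outside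
it (`radial_div`). The field `z / |z|_R²` is only Lipschitz, so the integration by parts goes through
Mathlib's Rademacher theory (`ibp`), with the circle `|z| = R` discarded as a null set. Choosing
`s` as minus the sign of `α` turns `α` into `|α|`. -/
open MeasureTheory Real Set

noncomputable section

/-- The plane `ℝ²`. -/
abbrev Plane : Type := EuclideanSpace ℝ (Fin 2)

/-- Counterclockwise rotation by `π/2`: `(a,b)^⊥ = (-b,a)`. -/
def perp (v : Plane) : Plane := (WithLp.equiv 2 (Fin 2 → ℝ)).symm ![-(v 1), v 0]

/-- The total magnetic vector potential `A_j(y) = Σ_{k≠j} (y-x_k)^⊥ / |y-x_k|_R²`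
felt by particle `j` at position `y`, where `|x|_R := max{|x|, R}`. -/
def magA (R : ℝ) {N : ℕ} (x : Fin N → Plane) (j : Fin N) (y : Plane) : Plane :=
  ∑ k ∈ Finset.univ.erase j, ((max ‖y - x k‖ R) ^ 2)⁻¹ • perp (y - x k)

/-- The `i`-th component of the magnetic one-particle derivative
`D_jΨ = -i∇_{x_j}Ψ + αA_j(x_j)Ψ`. -/
def covDer (α R : ℝ) {N : ℕ} (Ψ : (Fin N → Plane) → ℂ) (j : Fin N)
    (x : Fin N → Plane) (i : Fin 2) : ℂ :=
  -Complex.I * fderiv ℝ Ψ x (Pi.single j (EuclideanSpace.single i 1))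
    + (α * magA R x j (x j) i) * Ψ x


/-! ### Integration by parts -/

/-- Integration by parts of a Lipschitz function, with its almost everywhere defined line
derivative, against a compactly supported `C¹` function. -/
theorem ibp {N : ℕ} {C : NNReal} {f g : (Fin N → Plane) → ℝ} (hf : LipschitzWith C f)
    (hg : ContDiff ℝ 1 g) (hgs : HasCompactSupport g) (v : Fin N → Plane) :
    ∫ x, lineDeriv ℝ f x v * g x = -∫ x, f x * fderiv ℝ g x v := by
  obtain ⟨D, hD⟩ := ContDiff.lipschitzWith_of_hasCompactSupport (𝕂 := ℝ) hgs hg one_ne_zero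
  rw [hf.integral_lineDeriv_mul_eq hD hgs v, ← integral_neg]
  congr 1
  ext x
  rw [((hg.differentiable one_ne_zero) x).lineDeriv_eq_fderiv, map_neg]
  ring

/-- Both sides equal minus the integral of `u` against a mixed second derivative of `v`, so Jacobian
determinants integrate to zero. -/
theorem integral_fderiv_mul_fderiv {N : ℕ} {u v : (Fin N → Plane) → ℝ}
    (hu : ContDiff ℝ 2 u) (hv : ContDiff ℝ 2 v) (hus : HasCompactSupport u)
    (hvs : HasCompactSupport v) (a b : Fin N → Plane) :
    ∫ x, fderiv ℝ u x a * fderiv ℝ v x b = ∫ x, fderiv ℝ u x b * fderiv ℝ v x a := by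
  obtain ⟨D, hD⟩ := ContDiff.lipschitzWith_of_hasCompactSupport (𝕂 := ℝ) hus hu two_ne_zero
  have hdv : ContDiff ℝ 1 (fderiv ℝ v) := hv.fderiv_right (by norm_num)
  have key : ∀ c d : Fin N → Plane, ∫ x, fderiv ℝ u x c * fderiv ℝ v x d
      = -∫ x, u x * fderiv ℝ (fderiv ℝ v) x c d := by
    intro c d
    have h := ibp hD (g := fun x => fderiv ℝ v x d) (hdv.clm_apply contDiff_const)
      (hvs.fderiv_apply ℝ d) c
    have e1 : ∀ x, lineDeriv ℝ u x c = fderiv ℝ u x c := fun x =>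
      ((hu.differentiable two_ne_zero) x).lineDeriv_eq_fderiv
    have e2 : ∀ x, fderiv ℝ (fun x => fderiv ℝ v x d) x c = fderiv ℝ (fderiv ℝ v) x c d := by
      intro x
      rw [fderiv_clm_apply ((hdv.differentiable one_ne_zero) x) (differentiableAt_const d)]
      simp
    simpa only [e1, e2] using h
  rw [key a b, key b a]
  congr 2
  ext x
  rw [(hv.contDiffAt (x := x)).isSymmSndFDerivAt (by simp) a b]

/-! ### The truncated radial field -/

/-- The `i`-th coordinate of the truncated radial field `z / |z|_R²`; its rotation by `π/2` is the
vector potential generated by one particle at the origin. -/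
def radial (R : ℝ) (i : Fin 2) (z : Plane) : ℝ := ((max ‖z‖ R) ^ 2)⁻¹ * z i

theorem abs_coord_le (z : Plane) (i : Fin 2) : |z i| ≤ ‖z‖ := by
  simpa using PiLp.norm_apply_le z i

theorem radial_lipschitz {R : ℝ} (hR : 0 < R) (i : Fin 2) :
    LipschitzWith (3 / R ^ 2).toNNReal (radial R i) := by
  apply LipschitzWith.of_dist_le_mul
  intro z w
  rw [Real.coe_toNNReal _ (by positivity), dist_eq_norm, dist_eq_norm, Real.norm_eq_abs]
  unfold radial
  set p := max ‖z‖ R with hp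
  set q := max ‖w‖ R with hq
  have hpR : R ≤ p := le_max_right _ _
  have hqR : R ≤ q := le_max_right _ _
  have hp0 : 0 < p := hR.trans_le hpR
  have hq0 : 0 < q := hR.trans_le hqR
  have hwq : |w i| ≤ q := (abs_coord_le w i).trans (le_max_left _ _)
  have hpq : |q - p| ≤ ‖z - w‖ := by
    rw [hp, hq]
    refine (abs_max_sub_max_le_abs _ _ _).trans ?_
    rw [abs_sub_comm]
    exact abs_norm_sub_norm_le z w
  have hzw : |z i - w i| ≤ ‖z - w‖ := by simpa using abs_coord_le (z - w) i
  have e : (p ^ 2)⁻¹ * z i - (q ^ 2)⁻¹ * w i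
      = (p ^ 2)⁻¹ * (z i - w i) + (q - p) * ((w i / q) * ((p ^ 2)⁻¹ + (p * q)⁻¹)) := by
    field_simp
    ring
  have hw1 : |w i / q| ≤ 1 := by
    rw [abs_div, abs_of_pos hq0]
    exact (div_le_one hq0).2 hwq
  have h1 : (p ^ 2)⁻¹ ≤ (R ^ 2)⁻¹ := by gcongr
  have h2 : (p * q)⁻¹ ≤ (R ^ 2)⁻¹ := by rw [pow_two]; gcongr
  have h3 : |(p ^ 2)⁻¹ * (z i - w i)| ≤ (R ^ 2)⁻¹ * ‖z - w‖ := by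
    rw [abs_mul, abs_of_pos (by positivity : 0 < (p ^ 2)⁻¹)]
    gcongr
  have h4 : |(q - p) * ((w i / q) * ((p ^ 2)⁻¹ + (p * q)⁻¹))|
      ≤ ‖z - w‖ * (1 * ((R ^ 2)⁻¹ + (R ^ 2)⁻¹)) := by
    rw [abs_mul, abs_mul, abs_of_pos (by positivity : 0 < (p ^ 2)⁻¹ + (p * q)⁻¹)]
    gcongr
  rw [e]
  refine (abs_add_le _ _).trans ((add_le_add h3 h4).trans (le_of_eq ?_))
  field_simp
  ring

/-- The divergence of `z / |z|_R²` is `2 / R²` in the disk of radius `R` and `0` outside its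
closure. -/
theorem radial_div {R : ℝ} (hR : 0 < R) (z : Plane) (hz : ‖z‖ ≠ R) :
    lineDeriv ℝ (radial R 0) z (EuclideanSpace.single 0 1)
      + lineDeriv ℝ (radial R 1) z (EuclideanSpace.single 1 1)
    = if ‖z‖ < R then 2 / R ^ 2 else 0 := by
  split_ifs with h
  · have hev : ∀ᶠ y in nhds z, ‖y‖ < R := continuous_norm.continuousAt.eventually_lt_const h
    have key : ∀ i : Fin 2, lineDeriv ℝ (radial R i) z (EuclideanSpace.single i 1)
        = (R ^ 2)⁻¹ := by
      intro i
      have hE : radial R i =ᶠ[nhds z] fun y => (R ^ 2)⁻¹ * y i := by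
        filter_upwards [hev] with y hy
        simp [radial, max_eq_right hy.le]
      rw [hE.lineDeriv_eq]
      apply HasLineDerivAt.lineDeriv
      unfold HasLineDerivAt
      have : HasDerivAt (fun t : ℝ => (R ^ 2)⁻¹ * (z i + t * 1)) ((R ^ 2)⁻¹ * (1 * 1)) 0 :=
        (((hasDerivAt_id (0 : ℝ)).mul_const 1).const_add (z i)).const_mul _
      simpa using this
    rw [key, key]
    ring
  · have h' : R < ‖z‖ := lt_of_le_of_ne (not_lt.1 h) (Ne.symm hz)
    have hn : ∀ y : Plane, ‖y‖ ^ 2 = y 0 ^ 2 + y 1 ^ 2 := by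
      intro y
      rw [EuclideanSpace.norm_sq_eq]
      simp
    have hz0 : z 0 ^ 2 + z 1 ^ 2 ≠ 0 := by
      rw [← hn]
      have := hR.trans h'
      positivity
    have hev : ∀ᶠ y in nhds z, R < ‖y‖ := continuous_norm.continuousAt.eventually_const_lt h'
    have hE : ∀ i, radial R i =ᶠ[nhds z] fun y => y i / (y 0 ^ 2 + y 1 ^ 2) := by
      intro i
      filter_upwards [hev] with y hy
      rw [radial, max_eq_left hy.le, hn, inv_mul_eq_div]
    have d : ∀ a b : ℝ, a ^ 2 + b ^ 2 ≠ 0 →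
        HasDerivAt (fun t : ℝ => (a + t) / ((a + t) ^ 2 + b ^ 2))
          ((b ^ 2 - a ^ 2) / (a ^ 2 + b ^ 2) ^ 2) 0 := by
      intro a b hab
      have h1 : HasDerivAt (fun t : ℝ => a + t) 1 0 := (hasDerivAt_id (0 : ℝ)).const_add a
      have h2 := h1.div ((h1.pow 2).add_const (b ^ 2)) (by simpa using hab)
      refine h2.congr_deriv ?_
      simp only [Pi.pow_apply, add_zero, Nat.cast_ofNat]
      ring
    have l0 : lineDeriv ℝ (radial R 0) z (EuclideanSpace.single 0 1)
        = (z 1 ^ 2 - z 0 ^ 2) / (z 0 ^ 2 + z 1 ^ 2) ^ 2 := by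
      rw [(hE 0).lineDeriv_eq]
      apply HasLineDerivAt.lineDeriv
      unfold HasLineDerivAt
      simpa using d (z 0) (z 1) hz0
    have l1 : lineDeriv ℝ (radial R 1) z (EuclideanSpace.single 1 1)
        = (z 0 ^ 2 - z 1 ^ 2) / (z 0 ^ 2 + z 1 ^ 2) ^ 2 := by
      rw [(hE 1).lineDeriv_eq]
      apply HasLineDerivAt.lineDeriv
      unfold HasLineDerivAt
      simpa [add_comm] using d (z 1) (z 0) (by rwa [add_comm])
    rw [l0, l1]
    ring

/-! ### The field of one pair -/

/-- The unit vector of `(ℝ²)^N` that moves particle `j` in the `i`-th direction. -/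
def dir {N : ℕ} (j : Fin N) (i : Fin 2) : Fin N → Plane :=
  Pi.single j (EuclideanSpace.single i 1)

/-- Collision spheres are Lebesgue-null. -/
theorem ae_norm_sub_ne {N : ℕ} (R : ℝ) {j k : Fin N} (hjk : j ≠ k) :
    ∀ᵐ x : Fin N → Plane, ‖x j - x k‖ ≠ R := by
  let L : (Fin N → Plane) →ₗ[ℝ] Plane := LinearMap.proj (R := ℝ) (φ := fun _ : Fin N => Plane) j - LinearMap.proj k
  have hL : Function.Surjective L := by
    intro z
    refine ⟨Pi.single j z, ?_⟩
    simp [L, hjk.symm]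
  have hm : MeasurableSet {z : Plane | ‖z‖ ≠ R} :=
    (isClosed_eq continuous_norm continuous_const).measurableSet.compl
  have := (ae_comp_linearMap_mem_iff L volume volume hL hm).2 (by
    rw [ae_iff]
    have : {a : Plane | ¬ a ∈ {z : Plane | ‖z‖ ≠ R}} = Metric.sphere 0 R := by
      ext z; simp
    rw [this]
    exact Measure.addHaar_sphere _ _ _)
  exact this

theorem radial_pair_lipschitz {N : ℕ} {R : ℝ} (hR : 0 < R) (j k : Fin N) (i : Fin 2) :
    ∃ C, LipschitzWith C (fun x : Fin N → Plane => radial R i (x j - x k)) :=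
  ⟨_, (radial_lipschitz hR i).comp ((LipschitzWith.eval j).sub (LipschitzWith.eval k))⟩

/-- Weak form of the divergence identity `radial_div` in the relative coordinate of one pair. -/
theorem pair_identity {N : ℕ} {R : ℝ} (hR : 0 < R) {j k : Fin N} (hjk : j ≠ k)
    {g : (Fin N → Plane) → ℝ} (hg : ContDiff ℝ 1 g) (hgs : HasCompactSupport g) :
    ∫ x, (radial R 0 (x j - x k) * fderiv ℝ g x (dir j 0)
        + radial R 1 (x j - x k) * fderiv ℝ g x (dir j 1))
      = -∫ x : Fin N → Plane, (if ‖x j - x k‖ < R then 2 / R ^ 2 else 0) * g x := by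
  have hc : ∀ i : Fin 2, Continuous fun x : Fin N → Plane => radial R i (x j - x k) := by
    intro i
    obtain ⟨C, hC⟩ := radial_pair_lipschitz hR j k i
    exact hC.continuous
  have hint : ∀ i : Fin 2,
      Integrable fun x => radial R i (x j - x k) * fderiv ℝ g x (dir j i) := by
    intro i
    refine Continuous.integrable_of_hasCompactSupport ?_ (hgs.fderiv_apply ℝ (dir j i)).mul_left
    exact (hc i).mul ((hg.continuous_fderiv one_ne_zero).clm_apply continuous_const)
  have hint' : ∀ i : Fin 2, Integrable fun x =>
      lineDeriv ℝ (fun x : Fin N → Plane => radial R i (x j - x k)) x (dir j i) * g x := by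
    intro i
    obtain ⟨C, hC⟩ := radial_pair_lipschitz hR j k i
    exact (hC.locallyIntegrable_lineDeriv (dir j i)).integrable_smul_right_of_hasCompactSupport
      hg.continuous hgs
  have hi : ∀ i : Fin 2, ∫ x, radial R i (x j - x k) * fderiv ℝ g x (dir j i)
      = -∫ x, lineDeriv ℝ (fun x : Fin N → Plane => radial R i (x j - x k)) x (dir j i) * g x := by
    intro i
    obtain ⟨C, hC⟩ := radial_pair_lipschitz hR j k i
    rw [ibp hC hg hgs, neg_neg]
  rw [integral_add (hint 0) (hint 1), hi, hi, ← neg_add,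
    ← integral_add (hint' 0) (hint' 1)]
  congr 1
  apply integral_congr_ae
  filter_upwards [ae_norm_sub_ne R hjk] with x hx
  rw [← add_mul, ← radial_div hR _ hx]
  have e : ∀ i : Fin 2, lineDeriv ℝ (fun x : Fin N → Plane => radial R i (x j - x k)) x (dir j i)
      = lineDeriv ℝ (radial R i) (x j - x k) (EuclideanSpace.single i 1) := by
    intro i
    have hl : ∀ t : ℝ, (x + t • dir j i) j - (x + t • dir j i) k
        = x j - x k + t • EuclideanSpace.single i (1 : ℝ) := by
      intro t
      simp only [dir, Pi.add_apply, Pi.smul_apply, Pi.single_eq_same,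
        Pi.single_eq_of_ne hjk.symm, smul_zero, add_zero]
      abel
    simp only [lineDeriv, hl]
  rw [e, e]

/-! ### The bound for one particle -/

theorem magA_zero {N : ℕ} (R : ℝ) (x : Fin N → Plane) (j : Fin N) :
    magA R x j (x j) 0 = -∑ k ∈ Finset.univ.erase j, radial R 1 (x j - x k) := by
  simp only [magA, radial, perp, ← Finset.sum_neg_distrib]
  simp [-Finset.sum_neg_distrib, ← mul_neg]

theorem magA_one {N : ℕ} (R : ℝ) (x : Fin N → Plane) (j : Fin N) :
    magA R x j (x j) 1 = ∑ k ∈ Finset.univ.erase j, radial R 0 (x j - x k) := by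
  simp [magA, radial, perp]

/-- The square behind this is `‖D₀Ψ + s i D₁Ψ‖² ≥ 0` with `s = ± 1`, where `p`, `q` are the
partial derivatives of `Ψ` and `w` its value. -/
theorem cross_term_le (p q w : ℂ) (a b s : ℝ) (hs : s ^ 2 = 1) :
    s * (2 * (p.re * q.im - q.re * p.im) + b * (2 * (w.re * p.re + w.im * p.im))
        - a * (2 * (w.re * q.re + w.im * q.im)))
      ≤ ‖-Complex.I * p + a * w‖ ^ 2 + ‖-Complex.I * q + b * w‖ ^ 2 := by
  simp only [← Complex.normSq_eq_norm_sq, Complex.normSq_apply]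
  simp
  -- The two hints are the squared real and imaginary parts of that expression.
  nlinarith [sq_nonneg (p.im + a * w.re + s * (q.re - b * w.im)),
    sq_nonneg (-p.re + a * w.im + s * (q.im + b * w.re))]

/-- The inequality for each particle separately, from integrating `cross_term_le`. -/
theorem one_particle {N : ℕ} (α : ℝ) {R : ℝ} (hR : 0 < R)
    {Ψ : (Fin N → Plane) → ℂ} (hΨ : ContDiff ℝ 2 Ψ) (hsupp : HasCompactSupport Ψ) (j : Fin N) :
    2 * π * |α| * ∑ k ∈ Finset.univ.erase j, ∫ x : Fin N → Plane,
          (if ‖x j - x k‖ < R then (π * R ^ 2)⁻¹ else 0) * ‖Ψ x‖ ^ 2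
    ≤ ∫ x : Fin N → Plane, ∑ i : Fin 2, ‖covDer α R Ψ j x i‖ ^ 2 := by
  set u : (Fin N → Plane) → ℝ := fun x => (Ψ x).re with hu_def
  set v : (Fin N → Plane) → ℝ := fun x => (Ψ x).im with hv_def
  set ρ : (Fin N → Plane) → ℝ := fun x => u x ^ 2 + v x ^ 2 with hρ_def
  have hu : ContDiff ℝ 2 u := Complex.reCLM.contDiff.comp hΨ
  have hv : ContDiff ℝ 2 v := Complex.imCLM.contDiff.comp hΨ
  have hus : HasCompactSupport u := hsupp.comp_left (g := Complex.re) rfl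
  have hvs : HasCompactSupport v := hsupp.comp_left (g := Complex.im) rfl
  have hρ : ContDiff ℝ 1 ρ := ((hu.pow 2).add (hv.pow 2)).of_le (by norm_num)
  have hρs : HasCompactSupport ρ :=
    hsupp.comp_left (g := fun z : ℂ => z.re ^ 2 + z.im ^ 2) (by simp)
  have hnorm : ∀ x, ‖Ψ x‖ ^ 2 = ρ x := by
    intro x
    rw [← Complex.normSq_eq_norm_sq, Complex.normSq_apply]
    simp only [hρ_def, hu_def, hv_def]
    ring
  have hdΨ : ∀ x, HasFDerivAt Ψ (fderiv ℝ Ψ x) x := fun x =>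
    ((hΨ.differentiable two_ne_zero) x).hasFDerivAt
  have hdu : ∀ x e, fderiv ℝ u x e = (fderiv ℝ Ψ x e).re := by
    intro x e
    have : HasFDerivAt u _ x := Complex.reCLM.hasFDerivAt.comp x (hdΨ x)
    rw [this.fderiv]; rfl
  have hdv : ∀ x e, fderiv ℝ v x e = (fderiv ℝ Ψ x e).im := by
    intro x e
    have : HasFDerivAt v _ x := Complex.imCLM.hasFDerivAt.comp x (hdΨ x)
    rw [this.fderiv]; rfl
  have hdρ : ∀ x e, fderiv ℝ ρ x e = 2 * (u x * fderiv ℝ u x e + v x * fderiv ℝ v x e) := by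
    intro x e
    have h1 := ((hu.differentiable two_ne_zero) x).hasFDerivAt.pow 2
    have h2 := ((hv.differentiable two_ne_zero) x).hasFDerivAt.pow 2
    have : HasFDerivAt ρ _ x := h1.add h2
    rw [this.fderiv]
    simp
    ring
  obtain ⟨s, hs, hsα⟩ : ∃ s : ℝ, s ^ 2 = 1 ∧ s * -α = |α| := by
    rcases le_total 0 α with h | h
    · exact ⟨-1, by norm_num, by rw [abs_of_nonneg h]; ring⟩
    · exact ⟨1, by norm_num, by rw [abs_of_nonpos h]; ring⟩
  -- The Jacobian part and the pair parts of the cross term.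
  set J : (Fin N → Plane) → ℝ := fun x =>
    fderiv ℝ u x (dir j 0) * fderiv ℝ v x (dir j 1)
      - fderiv ℝ u x (dir j 1) * fderiv ℝ v x (dir j 0) with hJ_def
  set P : Fin N → (Fin N → Plane) → ℝ := fun k x =>
    radial R 0 (x j - x k) * fderiv ℝ ρ x (dir j 0)
      + radial R 1 (x j - x k) * fderiv ℝ ρ x (dir j 1) with hP_def
  have hpt : ∀ x, s * (2 * J x + α * ∑ k ∈ Finset.univ.erase j, P k x)
      ≤ ∑ i : Fin 2, ‖covDer α R Ψ j x i‖ ^ 2 := by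
    intro x
    have h := cross_term_le (fderiv ℝ Ψ x (dir j 0)) (fderiv ℝ Ψ x (dir j 1)) (Ψ x)
      (α * magA R x j (x j) 0) (α * magA R x j (x j) 1) s hs
    rw [Fin.sum_univ_two]
    refine le_trans (le_of_eq ?_) (h.trans (le_of_eq ?_))
    · simp only [hP_def, hJ_def, hdρ, Finset.sum_add_distrib, ← Finset.sum_mul, magA_zero,
        magA_one, hdu, hdv]
      simp only [hu_def, hv_def]
      ring
    · simp only [covDer, dir]
      push_cast
      rfl
  have hradial : ∀ (k : Fin N) (i : Fin 2),
      Continuous fun x : Fin N → Plane => radial R i (x j - x k) := by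
    intro k i
    obtain ⟨C, hC⟩ := radial_pair_lipschitz hR j k i
    exact hC.continuous
  have hcu : ∀ e, Continuous fun x => fderiv ℝ u x e := fun e =>
    (hu.continuous_fderiv two_ne_zero).clm_apply continuous_const
  have hcv : ∀ e, Continuous fun x => fderiv ℝ v x e := fun e =>
    (hv.continuous_fderiv two_ne_zero).clm_apply continuous_const
  have hcρ : ∀ e, Continuous fun x => fderiv ℝ ρ x e := fun e =>
    (hρ.continuous_fderiv one_ne_zero).clm_apply continuous_const
  have hJ1 : ∀ a b, Integrable fun x => fderiv ℝ u x a * fderiv ℝ v x b := fun a b =>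
    ((hcu a).mul (hcv b)).integrable_of_hasCompactSupport (hvs.fderiv_apply ℝ b).mul_left
  have hJint : Integrable J := (hJ1 _ _).sub (hJ1 _ _)
  have hP1 : ∀ k i, Integrable fun x => radial R i (x j - x k) * fderiv ℝ ρ x (dir j i) :=
    fun k i => ((hradial k i).mul (hcρ _)).integrable_of_hasCompactSupport
      (hρs.fderiv_apply ℝ _).mul_left
  have hPint : ∀ k, Integrable (P k) := fun k => (hP1 k 0).add (hP1 k 1)
  have hJ0 : ∫ x, J x = 0 := by
    rw [hJ_def, integral_sub (hJ1 _ _) (hJ1 _ _),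
      integral_fderiv_mul_fderiv hu hv hus hvs, sub_self]
  have hmag : ∀ i : Fin 2, Continuous fun x : Fin N → Plane => magA R x j (x j) i := by
    intro i
    fin_cases i
    · simp only [Fin.zero_eta, magA_zero]
      exact (continuous_finsetSum _ fun k _ => hradial k 1).neg
    · simp only [Fin.mk_one, magA_one]
      exact continuous_finsetSum _ fun k _ => hradial k 0
  have hcov : Integrable fun x => ∑ i : Fin 2, ‖covDer α R Ψ j x i‖ ^ 2 := by
    apply integrable_finsetSum
    intro i _
    apply Continuous.integrable_of_hasCompactSupport
    · refine Continuous.pow (Continuous.norm ?_) 2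
      unfold covDer
      refine (continuous_const.mul
        ((hΨ.continuous_fderiv two_ne_zero).clm_apply continuous_const)).add
        (Continuous.mul ?_ hΨ.continuous)
      exact continuous_const.mul (Complex.continuous_ofReal.comp (hmag i))
    · refine HasCompactSupport.intro hsupp fun x hx => ?_
      have h1 : fderiv ℝ Ψ x = 0 := by
        by_contra h
        exact hx (support_fderiv_subset ℝ h)
      simp [covDer, h1, image_eq_zero_of_notMem_tsupport hx]
  have hPk : ∀ k ∈ Finset.univ.erase j, ∫ x, P k x
      = -(2 * π * ∫ x : Fin N → Plane,
          (if ‖x j - x k‖ < R then (π * R ^ 2)⁻¹ else 0) * ‖Ψ x‖ ^ 2) := by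
    intro k hk
    rw [hP_def]
    simp only
    rw [pair_identity hR (Finset.ne_of_mem_erase hk).symm hρ hρs, ← integral_const_mul]
    congr 2
    ext x
    rw [hnorm]
    have := Real.pi_pos
    split_ifs
    · field_simp
    · simp
  have hSint : Integrable fun x => ∑ k ∈ Finset.univ.erase j, P k x :=
    integrable_finsetSum _ fun k _ => hPint k
  have hmain := integral_mono
    (((hJint.const_mul 2).add (hSint.const_mul α)).const_mul s) hcov hpt
  refine le_trans (le_of_eq ?_) hmain
  rw [integral_const_mul]
  simp only [Pi.add_apply]
  rw [integral_add (hJint.const_mul 2) (hSint.const_mul α), integral_const_mul,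
    integral_const_mul, hJ0, integral_finsetSum _ fun k _ => hPint k, Finset.sum_congr rfl hPk,
    Finset.sum_neg_distrib, ← Finset.mul_sum, ← hsα]
  ring

/-- **Short-range magnetic interaction** (Lemma 1.1).  For `α ∈ ℝ`, `R > 0`, `N ≥ 1`
and every smooth compactly supported symmetric `Ψ : (ℝ²)^N → ℂ`,
`Σ_j ∫ |D_jΨ|² ≥ 2π|α| Σ_{j≠k} ∫ (πR²)⁻¹ 1_{B_R(0)}(x_j - x_k) |Ψ|²`. -/
theorem short_range_magnetic_interaction
    (α R : ℝ) (hR : 0 < R) (N : ℕ) (hN : 1 ≤ N)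
    (Ψ : (Fin N → Plane) → ℂ)
    (hsmooth : ContDiff ℝ (⊤ : ℕ∞) Ψ) (hsupp : HasCompactSupport Ψ)
    (hsym : ∀ (σ : Equiv.Perm (Fin N)) (x : Fin N → Plane), Ψ (x ∘ σ) = Ψ x) :
    2 * π * |α| * ∑ j : Fin N, ∑ k ∈ Finset.univ.erase j,
        ∫ x : Fin N → Plane,
          (if ‖x j - x k‖ < R then (π * R ^ 2)⁻¹ else 0) * ‖Ψ x‖ ^ 2
    ≤ ∑ j : Fin N, ∫ x : Fin N → Plane, ∑ i : Fin 2, ‖covDer α R Ψ j x i‖ ^ 2 := by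
  rw [Finset.mul_sum]
  exact Finset.sum_le_sum fun j _ =>
    one_particle α hR (hsmooth.of_le (WithTop.coe_le_coe.2 le_top)) hsupp j
end
end

section
/- Let α ∈ ℝ, R = 0, N ≥ 1 and let Ω ⊆ ℝ² be open and convex. Then for every symmetric Ψ ∈ C_c^∞((ℝ²)^N ∖ △△; ℂ), Σ_{j=1}^N ∫_{Ω^N} |D_jΨ|² dx ≥ (α_N²/N) · Σ_{1≤j<k≤N} ∫_{Ω^N} |Ψ(x)|² r_jk^{-2} · 1_{B_{δ(X_jk)}(0)}(r_jk) dx. (Local many-particle magnetic Hardy inequality for ideal anyons, Theorem 1.2.) -/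
/-!
The proof reduces the many-particle inequality to a sharp inequality on circles.

*Parallelogram identity.* `N ∑ⱼ |DⱼΨ|² = ∑_{j<k} |(Dⱼ - Dₖ)Ψ|² + |∑ⱼ DⱼΨ|²`, so the kinetic
energy dominates `1/N` times the sum of the relative energies of the pairs (`sum_relEnergy_le`).

*Rotating a pair.* For a fixed pair `j, k` let `pairRot j k θ` turn the two particles by `θ` about
their midpoint `X_jk` and leave the others alone. It preserves Lebesgue measure, and it preserves
the set `pairSet Ω j k` of configurations in `Ω^N` with `r_jk < δ(X_jk)`: by convexity the midpoint
is in `Ω`, and so is the disk of radius `δ(X_jk)` about it. Averaging over `θ ∈ [0, π]`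
(`avg_le`) it is enough to compare the two sides on every half orbit.

*One orbit.* The component of `(Dⱼ - Dₖ)Ψ` along the orbit is, up to the factor `1 / r_jk`,
`-i d/dθ + α F(θ)` applied to `Ψ`, where `F` is the angular component of `Aⱼ - Aₖ`. By `flux_eq`,
`F` is `1` plus the derivatives of the arguments of `xⱼ - x_l` and `xₖ - x_l`. Each such argument is
a periodic function plus `ε_l θ`, with `ε_l = 1` if the orbit encloses `x_l` and `0` otherwise
(`exists_gauge`). The periodic parts are gauged away; they have the same value at both ends of the
half orbit, since a half turn exchanges the two particles. What remains is the constant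
`c = (2p + 1)α`, with `p = ∑ ε_l ≤ N - 2` the number of enclosed particles. As `Ψ` is symmetric, it is
`π`-periodic along the orbit, where `-i d/dθ + c` has spectrum `c + 2ℤ`, and Parseval's identity
gives the constant `α_N²` (`circle_ineq`, `pair_circle_ineq`).

The vector potentials are singular on the diagonals, but `Ψ` vanishes near them; all the functions
involved are therefore continuous with compact support (`continuous_of_dichotomy`).
-/

open MeasureTheory Real Set

noncomputable section

/-- `α_N := min_{p ∈ {0,…,N-2}} min_{q ∈ ℤ} |(2p+1)α - 2q|`. -/
def alphaN (α : ℝ) (N : ℕ) : ℝ :=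
  sInf {t : ℝ | ∃ p : ℕ, p + 1 < N ∧ ∃ q : ℤ, t = |(2 * (p : ℝ) + 1) * α - 2 * (q : ℝ)|}

/-! ### The one-dimensional inequality and the gauge -/

/-- For a `π`-periodic function, `d/dt + ic` acts on the `n`-th Fourier mode `e^{2int}` as
multiplication by `i(c + 2n)`. -/
lemma fourierCoeffOn_deriv_add {v v' : ℝ → ℂ} (hv : ∀ t, HasDerivAt v (v' t) t)
    (hv' : Continuous v') (hper : v π = v 0) (c : ℝ) (n : ℤ) :
    fourierCoeffOn Real.pi_pos (fun t => v' t + Complex.I * c * v t) n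
      = Complex.I * ((c + 2 * n : ℝ) : ℂ) * fourierCoeffOn Real.pi_pos v n := by
  have hvc : Continuous v := continuous_iff_continuousAt.2 fun t => (hv t).continuousAt
  have hadd : fourierCoeffOn Real.pi_pos (fun t => v' t + Complex.I * c * v t) n
      = fourierCoeffOn Real.pi_pos v' n + Complex.I * c * fourierCoeffOn Real.pi_pos v n := by
    have hF : Continuous fun x : ℝ => (fourier (-n) (x : AddCircle (π - 0)) : ℂ) :=
      (fourier (-n)).continuous.comp (AddCircle.continuous_mk' _)
    rw [fourierCoeffOn_eq_integral, fourierCoeffOn_eq_integral, fourierCoeffOn_eq_integral]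
    simp only [smul_eq_mul, mul_add]
    rw [intervalIntegral.integral_add]
    · have : (fun x : ℝ => (fourier (-n) (x : AddCircle (π - 0)) : ℂ) * (Complex.I * c * v x))
          = fun x : ℝ => (Complex.I * c) * ((fourier (-n) (x : AddCircle (π - 0)) : ℂ) * v x) := by
        funext x; ring
      rw [this, intervalIntegral.integral_const_mul, smul_add, mul_smul_comm]
    · exact (show Continuous fun x : ℝ => (fourier (-n) (x : AddCircle (π - 0)) : ℂ) * v' x from
        hF.mul hv').intervalIntegrable _ _
    · exact (show Continuous fun x : ℝ => (fourier (-n) (x : AddCircle (π - 0)) : ℂ) *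
        (Complex.I * c * v x) from hF.mul (continuous_const.mul hvc)).intervalIntegrable _ _
  rw [hadd]
  have hπ : (π : ℂ) ≠ 0 := by exact_mod_cast Real.pi_ne_zero
  rcases eq_or_ne n 0 with rfl | hn
  · have h0 : fourierCoeffOn Real.pi_pos v' 0 = 0 := by
      rw [fourierCoeffOn_eq_integral]
      simp only [neg_zero, fourier_zero, one_smul]
      rw [intervalIntegral.integral_eq_sub_of_hasDerivAt (fun x _ => hv x)
        (hv'.intervalIntegrable _ _), hper, sub_self, smul_zero]
    rw [h0]; push_cast; ring
  · have h1 := fourierCoeffOn_of_hasDerivAt Real.pi_pos hn (fun x _ => hv x)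
      (hv'.intervalIntegrable _ _)
    have hn' : (n : ℂ) ≠ 0 := by exact_mod_cast hn
    rw [hper, sub_self, mul_zero] at h1
    have h2 : fourierCoeffOn Real.pi_pos v' n
        = 2 * Complex.I * n * fourierCoeffOn Real.pi_pos v n := by
      rw [h1]
      have := Complex.I_ne_zero
      push_cast
      field_simp
      ring
    rw [h2]; push_cast; ring

/-- Sharp one-dimensional magnetic inequality on a circle of length `π` with constant potential
`c`: the operator `-i d/dt + c` has spectrum `c + 2ℤ`. -/
lemma circle_ineq {v v' : ℝ → ℂ} (hv : ∀ t, HasDerivAt v (v' t) t)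
    (hv' : Continuous v') (hper : v π = v 0) (c ρ : ℝ) (hρ0 : 0 ≤ ρ)
    (hρ : ∀ q : ℤ, ρ ≤ |c - 2 * q|) :
    ρ ^ 2 * ∫ t in (0 : ℝ)..π, ‖v t‖ ^ 2
      ≤ ∫ t in (0 : ℝ)..π, ‖v' t + Complex.I * c * v t‖ ^ 2 := by
  have hvc : Continuous v := continuous_iff_continuousAt.2 fun t => (hv t).continuousAt
  have hL : ∀ f : ℝ → ℂ, Continuous f → MemLp f 2 (volume.restrict (Ioc 0 π)) := fun f hf =>
    (memLp_two_iff_integrable_sq_norm hf.aestronglyMeasurable).2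
      (((hf.norm.pow 2).integrableOn_Icc).mono_set Ioc_subset_Icc_self)
  have p1 := (hasSum_sq_fourierCoeffOn Real.pi_pos (hL v hvc)).mul_left (ρ ^ 2)
  have p2 := hasSum_sq_fourierCoeffOn Real.pi_pos
    (hL (fun t => v' t + Complex.I * c * v t) (hv'.add (continuous_const.mul hvc)))
  have h := hasSum_le (fun n : ℤ => ?_) p1 p2
  · simp only [sub_zero, smul_eq_mul] at h
    have hp := Real.pi_pos
    have : π⁻¹ * (ρ ^ 2 * ∫ t in (0 : ℝ)..π, ‖v t‖ ^ 2)
      ≤ π⁻¹ * ∫ t in (0 : ℝ)..π, ‖v' t + Complex.I * c * v t‖ ^ 2 := by linarith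
    exact le_of_mul_le_mul_left this (by positivity)
  · rw [fourierCoeffOn_deriv_add hv hv' hper, norm_mul, norm_mul, Complex.norm_I, one_mul,
      mul_pow, Complex.norm_real]
    have h3 : ρ ^ 2 ≤ ‖c + 2 * n‖ ^ 2 := by
      have := hρ (-n)
      push_cast at this
      rw [mul_neg, sub_neg_eq_add] at this
      exact pow_le_pow_left₀ hρ0 this 2
    exact mul_le_mul_of_nonneg_right h3 (sq_nonneg _)

/-- A periodic branch `g` of the argument along the circle `θ ↦ y + e^{iθ}z`, after subtraction of
`pθ`, where `p` is `1` if the circle encloses the origin and `0` otherwise. It is smooth wherever the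
circle is away from the origin, even if the circle passes through the origin elsewhere. -/
lemma exists_gauge (y z : ℂ) (hz : z ≠ 0) : ∃ g : ℝ → ℝ, ∃ p : ℕ, p ≤ 1 ∧
    (∀ θ, g (θ + 2 * π) = g θ) ∧
    ∀ θ : ℝ, y + Complex.exp (θ * Complex.I) * z ≠ 0 →
      ContDiffAt ℝ (⊤ : ℕ∞) g θ ∧
      HasDerivAt g ((Complex.exp (θ * Complex.I) * z /
        (y + Complex.exp (θ * Complex.I) * z)).re - p) θ := by
  -- `1 + w` with `|w| ≤ 1` lies in the slit plane unless it vanishes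
  have key : ∀ w : ℂ, ‖w‖ ≤ 1 → 1 + w ≠ 0 → 1 + w ∈ Complex.slitPlane := by
    intro w hw h0
    rw [Complex.mem_slitPlane_iff]
    by_contra! hcon
    obtain ⟨h1, h2⟩ := hcon
    have h3 : -1 ≤ w.re := by
      have := (abs_le.1 ((Complex.abs_re_le_norm w).trans hw)).1
      exact this
    simp only [Complex.add_re, Complex.one_re, Complex.add_im, Complex.one_im, zero_add] at h1 h2
    exact h0 (Complex.ext (by simp; linarith) (by simpa using h2))
  have hexpn : ∀ θ : ℝ, ‖Complex.exp (θ * Complex.I)‖ = 1 := Complex.norm_exp_ofReal_mul_I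
  have hE : ∀ θ : ℝ, Complex.exp (-(θ * Complex.I)) = (Complex.exp (θ * Complex.I))⁻¹ :=
    fun θ => Complex.exp_neg _
  have himd : ∀ (f : ℝ → ℂ) (f' : ℂ) (θ : ℝ), HasDerivAt f f' θ →
      HasDerivAt (fun t => (f t).im) f'.im θ := fun f f' θ h =>
    (Complex.imCLM.hasFDerivAt.comp_hasDerivAt θ h)
  have hd0 : ∀ θ : ℝ, HasDerivAt (fun t : ℝ => (t : ℂ) * Complex.I) Complex.I θ := fun θ => by
    simpa using (Complex.ofRealCLM.hasDerivAt (x := θ)).mul_const Complex.I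
  have hc0 : ContDiff ℝ (⊤ : ℕ∞) (fun t : ℝ => (t : ℂ) * Complex.I) :=
    Complex.ofRealCLM.contDiff.mul contDiff_const
  have hlogc : ∀ w : ℂ, w ∈ Complex.slitPlane → ContDiffAt ℝ (⊤ : ℕ∞) Complex.log w := fun w hw =>
    (Complex.contDiffAt_log hw).restrict_scalars ℝ
  have hlog : ∀ (f : ℝ → ℂ) (θ : ℝ), ContDiffAt ℝ (⊤ : ℕ∞) f θ → f θ ∈ Complex.slitPlane →
      ContDiffAt ℝ (⊤ : ℕ∞) (fun t => (Complex.log (f t)).im) θ := fun f θ hf hs =>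
    (Complex.imCLM.contDiff.contDiffAt).comp θ ((hlogc _ hs).comp θ hf)
  -- factor out the larger of the two terms, so that `Complex.log` is applied to `1 + w`, `|w| ≤ 1`
  by_cases hyz : ‖y‖ < ‖z‖
  · refine ⟨fun θ => (Complex.log (1 + y / z * Complex.exp (-(θ * Complex.I)))).im, 1, le_rfl,
      ?_, ?_⟩
    · intro θ
      simp only [hE]
      push_cast
      rw [add_mul, Complex.exp_add, Complex.exp_two_pi_mul_I, mul_one]
    · intro θ hne
      have hs : 1 + y / z * Complex.exp (-(θ * Complex.I)) ∈ Complex.slitPlane := by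
        apply key
        · rw [norm_mul, hE, norm_inv, hexpn, norm_div]
          simpa using div_le_one_of_le₀ hyz.le (norm_nonneg _)
        · intro h0
          apply hne
          rw [hE] at h0
          have := Complex.exp_ne_zero (θ * Complex.I)
          field_simp at h0
          linear_combination h0
      refine ⟨hlog _ _ ?_ hs, ?_⟩
      · exact (contDiff_const.add (contDiff_const.mul hc0.neg.cexp)).contDiffAt
      · have h1 := ((((hd0 θ).neg.cexp).const_mul (y / z)).const_add 1).clog_real hs
        have h2 := himd _ _ _ h1
        refine h2.congr_deriv ?_
        have hkey : y / z * (Complex.exp (-(θ * Complex.I)) * -Complex.I)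
            / (1 + y / z * Complex.exp (-(θ * Complex.I)))
            = Complex.I * (Complex.exp (θ * Complex.I) * z /
              (y + Complex.exp (θ * Complex.I) * z) - 1) := by
          rw [hE] at hs ⊢
          have hs0 := Complex.slitPlane_ne_zero hs
          have := Complex.exp_ne_zero (θ * Complex.I)
          set e := Complex.exp (θ * Complex.I)
          have h5 : 1 + y / z * e⁻¹ = (y + e * z) / (z * e) := by field_simp; ring
          rw [h5]
          rw [div_sub_one hne]
          field_simp
          ring
        simp only [Pi.neg_apply]
        rw [hkey]
        simp
  · have hy : y ≠ 0 := by
      rintro rfl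
      exact hyz (by simpa using hz)
    push Not at hyz
    refine ⟨fun θ => (Complex.log (1 + z / y * Complex.exp (θ * Complex.I))).im, 0, zero_le_one,
      ?_, ?_⟩
    · intro θ
      push_cast
      rw [add_mul, Complex.exp_add, Complex.exp_two_pi_mul_I, mul_one]
    · intro θ hne
      have hs : 1 + z / y * Complex.exp (θ * Complex.I) ∈ Complex.slitPlane := by
        apply key
        · rw [norm_mul, hexpn, norm_div, mul_one]
          exact div_le_one_of_le₀ hyz (norm_nonneg _)
        · intro h0
          apply hne
          field_simp at h0
          linear_combination h0
      refine ⟨hlog _ _ ?_ hs, ?_⟩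
      · exact (contDiff_const.add (contDiff_const.mul hc0.cexp)).contDiffAt
      · have h1 := ((((hd0 θ).cexp).const_mul (z / y)).const_add 1).clog_real hs
        have h2 := himd _ _ _ h1
        refine h2.congr_deriv ?_
        have hkey : z / y * (Complex.exp (θ * Complex.I) * Complex.I)
            / (1 + z / y * Complex.exp (θ * Complex.I))
            = Complex.I * (Complex.exp (θ * Complex.I) * z /
              (y + Complex.exp (θ * Complex.I) * z)) := by
          set e := Complex.exp (θ * Complex.I)
          have h5 : 1 + z / y * e = (y + e * z) / y := by field_simp
          rw [h5]
          field_simp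
        rw [hkey]
        simp

/-! ### Rotations of the plane -/

@[simp] lemma perp_zero' (v : Plane) : perp v 0 = -(v 1) := rfl

@[simp] lemma perp_one' (v : Plane) : perp v 1 = v 0 := rfl

lemma plane_ext {v w : Plane} (h0 : v 0 = w 0) (h1 : v 1 = w 1) : v = w := by
  ext i; fin_cases i <;> assumption

lemma plane_norm_sq (v : Plane) : ‖v‖ ^ 2 = v 0 ^ 2 + v 1 ^ 2 := by
  rw [EuclideanSpace.norm_sq_eq, Fin.sum_univ_two]; simp

lemma perp_add (v w : Plane) : perp (v + w) = perp v + perp w := by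
  apply plane_ext <;> simp [add_comm]

lemma perp_smul (c : ℝ) (v : Plane) : perp (c • v) = c • perp v := by
  apply plane_ext <;> simp

lemma continuous_perp : Continuous perp :=
  LinearMap.continuous_of_finiteDimensional
    { toFun := perp, map_add' := perp_add, map_smul' := perp_smul : Plane →ₗ[ℝ] Plane }

/-- The identification of the plane with `ℂ`. -/
def toC (v : Plane) : ℂ := ⟨v 0, v 1⟩

lemma toC_add (v w : Plane) : toC (v + w) = toC v + toC w := rfl

lemma toC_sub (v w : Plane) : toC (v - w) = toC v - toC w := by
  apply Complex.ext <;> simp [toC]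

lemma toC_neg (v : Plane) : toC (-v) = -toC v := by
  apply Complex.ext <;> simp [toC]

lemma toC_eq_zero {v : Plane} : toC v = 0 ↔ v = 0 := by
  constructor
  · intro h
    exact plane_ext (congrArg Complex.re h) (congrArg Complex.im h)
  · rintro rfl
    apply Complex.ext <;> simp [toC]

/-- Rotation of the plane by the angle `θ`. -/
def rot (θ : ℝ) (v : Plane) : Plane := Real.cos θ • v + Real.sin θ • perp v

@[simp] lemma rot_apply_zero (θ : ℝ) (v : Plane) :
    rot θ v 0 = Real.cos θ * v 0 - Real.sin θ * v 1 := by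
  simp [rot]; ring

@[simp] lemma rot_apply_one (θ : ℝ) (v : Plane) :
    rot θ v 1 = Real.cos θ * v 1 + Real.sin θ * v 0 := by
  simp [rot]

lemma toC_rot (θ : ℝ) (v : Plane) : toC (rot θ v) = Complex.exp (θ * Complex.I) * toC v := by
  rw [Complex.exp_mul_I]
  apply Complex.ext <;> simp [toC, Complex.cos_ofReal_re, Complex.sin_ofReal_re]

lemma rot_add (θ : ℝ) (v w : Plane) : rot θ (v + w) = rot θ v + rot θ w := by
  simp only [rot, perp_add]; module

lemma rot_smul (θ c : ℝ) (v : Plane) : rot θ (c • v) = c • rot θ v := by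
  simp only [rot, perp_smul]; module

lemma rot_rot (θ φ : ℝ) (v : Plane) : rot θ (rot φ v) = rot (θ + φ) v := by
  apply plane_ext <;> simp [Real.cos_add, Real.sin_add] <;> ring

lemma norm_rot (θ : ℝ) (v : Plane) : ‖rot θ v‖ = ‖v‖ := by
  have h : ‖rot θ v‖ ^ 2 = ‖v‖ ^ 2 := by
    rw [plane_norm_sq, plane_norm_sq, rot_apply_zero, rot_apply_one]
    linear_combination (v 0 ^ 2 + v 1 ^ 2) * Real.cos_sq_add_sin_sq θ
  exact (pow_left_inj₀ (norm_nonneg _) (norm_nonneg _) two_ne_zero).1 h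

/-! ### Rotation of a pair of particles -/

section
variable {N : ℕ} {j k : Fin N}

/-- The relative coordinate `r_jk`. -/
def rel (j k : Fin N) (x : Fin N → Plane) : Plane := (2 : ℝ)⁻¹ • (x j - x k)

/-- The midpoint `X_jk`. -/
def cen (j k : Fin N) (x : Fin N → Plane) : Plane := (2 : ℝ)⁻¹ • (x j + x k)

/-- Rotation of the particles `j`, `k` by the angle `θ` about their midpoint, all other
particles being kept fixed. -/
def pairRot (j k : Fin N) (θ : ℝ) (x : Fin N → Plane) : Fin N → Plane :=
  x + (Pi.single j (rot θ (rel j k x) - rel j k x) - Pi.single k (rot θ (rel j k x) - rel j k x))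

lemma cen_add_rel (x : Fin N → Plane) : cen j k x + rel j k x = x j := by
  simp only [cen, rel]; module

lemma cen_sub_rel (x : Fin N → Plane) : cen j k x - rel j k x = x k := by
  simp only [cen, rel]; module

lemma pairRot_left (hjk : j ≠ k) (θ : ℝ) (x : Fin N → Plane) :
    pairRot j k θ x j = cen j k x + rot θ (rel j k x) := by
  simp only [pairRot, Pi.add_apply, Pi.sub_apply, Pi.single_eq_same, Pi.single_eq_of_ne hjk]
  rw [← cen_add_rel (j := j) (k := k) x]
  abel_nf

lemma pairRot_right (hjk : j ≠ k) (θ : ℝ) (x : Fin N → Plane) :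
    pairRot j k θ x k = cen j k x - rot θ (rel j k x) := by
  simp only [pairRot, Pi.add_apply, Pi.sub_apply, Pi.single_eq_same, Pi.single_eq_of_ne hjk.symm]
  have h := cen_sub_rel (j := j) (k := k) x
  rw [zero_sub, neg_sub, ← h]
  abel_nf

lemma pairRot_other {l : Fin N} (hj : l ≠ j) (hk : l ≠ k) (θ : ℝ) (x : Fin N → Plane) :
    pairRot j k θ x l = x l := by
  simp [pairRot, Pi.single_eq_of_ne hj, Pi.single_eq_of_ne hk]

lemma rel_pairRot (hjk : j ≠ k) (θ : ℝ) (x : Fin N → Plane) :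
    rel j k (pairRot j k θ x) = rot θ (rel j k x) := by
  rw [rel, pairRot_left hjk, pairRot_right hjk]; module

lemma cen_pairRot (hjk : j ≠ k) (θ : ℝ) (x : Fin N → Plane) :
    cen j k (pairRot j k θ x) = cen j k x := by
  rw [cen, pairRot_left hjk, pairRot_right hjk]; module

lemma pairRot_pairRot (hjk : j ≠ k) (θ φ : ℝ) (x : Fin N → Plane) :
    pairRot j k θ (pairRot j k φ x) = pairRot j k (θ + φ) x := by
  funext l
  by_cases hj : l = j
  · subst hj
    rw [pairRot_left hjk, pairRot_left hjk, cen_pairRot hjk, rel_pairRot hjk, rot_rot]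
  by_cases hk : l = k
  · subst hk
    rw [pairRot_right hjk, pairRot_right hjk, cen_pairRot hjk, rel_pairRot hjk, rot_rot]
  · rw [pairRot_other hj hk, pairRot_other hj hk, pairRot_other hj hk]

lemma pairRot_zero (x : Fin N → Plane) : pairRot j k 0 x = x := by
  simp [pairRot, rot]

lemma pairRot_pi (hjk : j ≠ k) (x : Fin N → Plane) :
    pairRot j k π x = x ∘ Equiv.swap j k := by
  have h : rot π (rel j k x) = -rel j k x := by simp [rot]
  funext l
  by_cases hj : l = j
  · subst hj
    rw [pairRot_left hjk, h, ← sub_eq_add_neg, cen_sub_rel]; simp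
  by_cases hk : l = k
  · subst hk
    rw [pairRot_right hjk, h, sub_neg_eq_add, cen_add_rel]; simp
  · rw [pairRot_other hj hk]; simp [Equiv.swap_apply_of_ne_of_ne hj hk]

lemma continuous_rel : Continuous (rel j k : (Fin N → Plane) → Plane) := by
  unfold rel; fun_prop

lemma continuous_cen : Continuous (cen j k : (Fin N → Plane) → Plane) := by
  unfold cen; fun_prop

lemma continuous_pairRot :
    Continuous fun p : ℝ × (Fin N → Plane) => pairRot j k p.1 p.2 := by
  have hr : Continuous fun p : ℝ × (Fin N → Plane) => rel j k p.2 :=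
    continuous_rel.comp continuous_snd
  have hR : Continuous fun p : ℝ × (Fin N → Plane) => rot p.1 (rel j k p.2) := by
    unfold rot
    exact ((Real.continuous_cos.comp continuous_fst).smul hr).add
      ((Real.continuous_sin.comp continuous_fst).smul (continuous_perp.comp hr))
  exact continuous_snd.add (((continuous_single j).comp (hR.sub hr)).sub
    ((continuous_single k).comp (hR.sub hr)))

/-- The velocity of the pair rotation. -/
def pairVel (j k : Fin N) (x : Fin N → Plane) : Fin N → Plane :=
  Pi.single j (perp (rel j k x)) - Pi.single k (perp (rel j k x))

lemma hasDerivAt_rot (θ : ℝ) (v : Plane) : HasDerivAt (fun t => rot t v) (perp (rot θ v)) θ := by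
  have h := ((Real.hasDerivAt_cos θ).smul_const v).add ((Real.hasDerivAt_sin θ).smul_const (perp v))
  refine h.congr_deriv ?_
  apply plane_ext
  · simp
  · simp
    ring

lemma contDiff_rot (v : Plane) : ContDiff ℝ (⊤ : ℕ∞) (fun t => rot t v) :=
  (Real.contDiff_cos.smul contDiff_const).add (Real.contDiff_sin.smul contDiff_const)

/-- The inclusion of the plane as the `l`-th particle, as a continuous linear map. -/
def singleL (l : Fin N) : Plane →L[ℝ] (Fin N → Plane) :=
  ContinuousLinearMap.single ℝ (fun _ => Plane) l

lemma contDiff_pairRot (x : Fin N → Plane) :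
    ContDiff ℝ (⊤ : ℕ∞) (fun t => pairRot j k t x) := by
  have h := (contDiff_rot (rel j k x)).sub (contDiff_const (c := rel j k x))
  exact contDiff_const.add (((singleL j).contDiff.comp h).sub ((singleL k).contDiff.comp h))

lemma hasDerivAt_pairRot (hjk : j ≠ k) (x : Fin N → Plane) (θ : ℝ) :
    HasDerivAt (fun t => pairRot j k t x) (pairVel j k (pairRot j k θ x)) θ := by
  have h := (hasDerivAt_rot θ (rel j k x)).sub_const (rel j k x)
  have h2 := (((singleL j).hasFDerivAt.comp_hasDerivAt θ h).sub
    ((singleL k).hasFDerivAt.comp_hasDerivAt θ h)).const_add x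
  rw [pairVel, rel_pairRot hjk]
  exact h2

lemma sum_split {M : Type*} [AddCommMonoid M] (hjk : j ≠ k) (f : Fin N → M) :
    ∑ l, f l = f j + (f k + ∑ l ∈ (Finset.univ.erase j).erase k, f l) := by
  rw [Finset.add_sum_erase _ _ (by simp [hjk.symm]), Finset.add_sum_erase _ _ (by simp)]

lemma sum_norm_sq_pairRot (hjk : j ≠ k) (θ : ℝ) (x : Fin N → Plane) :
    ∑ l, ‖pairRot j k θ x l‖ ^ 2 = ∑ l, ‖x l‖ ^ 2 := by
  rw [sum_split hjk, sum_split hjk (fun l => ‖x l‖ ^ 2)]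
  have h1 : ∑ l ∈ (Finset.univ.erase j).erase k, ‖pairRot j k θ x l‖ ^ 2
      = ∑ l ∈ (Finset.univ.erase j).erase k, ‖x l‖ ^ 2 := by
    refine Finset.sum_congr rfl fun l hl => ?_
    simp only [Finset.mem_erase, Finset.mem_univ, and_true] at hl
    rw [pairRot_other hl.2 hl.1]
  have h2 := norm_rot θ (rel j k x)
  have h3 := parallelogram_law_with_norm ℝ (cen j k x) (rot θ (rel j k x))
  have h4 := parallelogram_law_with_norm ℝ (cen j k x) (rel j k x)
  rw [h1, pairRot_left hjk, pairRot_right hjk]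
  rw [cen_add_rel, cen_sub_rel, ← h2] at h4
  simp only [pow_two]
  linarith

/-- The pair rotation as a linear map. -/
def pairRotL (j k : Fin N) (θ : ℝ) : (Fin N → Plane) →ₗ[ℝ] (Fin N → Plane) where
  toFun := pairRot j k θ
  map_add' x y := by
    have h : rel j k (x + y) = rel j k x + rel j k y := by simp only [rel, Pi.add_apply]; module
    have h2 : rot θ (rel j k x + rel j k y) - (rel j k x + rel j k y)
        = (rot θ (rel j k x) - rel j k x) + (rot θ (rel j k y) - rel j k y) := by
      rw [rot_add]; abel
    simp only [pairRot, h, h2, Pi.single_add]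
    abel
  map_smul' c x := by
    have h : rel j k (c • x) = c • rel j k x := by simp only [rel, Pi.smul_apply]; module
    simp only [pairRot, h, rot_smul, ← smul_sub, Pi.single_smul, RingHom.id_apply, smul_add]

/-- The pair rotation as a homeomorphism. -/
def pairRotH (hjk : j ≠ k) (θ : ℝ) : (Fin N → Plane) ≃ₜ (Fin N → Plane) where
  toFun := pairRot j k θ
  invFun := pairRot j k (-θ)
  left_inv x := by rw [pairRot_pairRot hjk, neg_add_cancel, pairRot_zero]
  right_inv x := by rw [pairRot_pairRot hjk, add_neg_cancel, pairRot_zero]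
  continuous_toFun := continuous_pairRot.comp (continuous_const.prodMk continuous_id)
  continuous_invFun := continuous_pairRot.comp (continuous_const.prodMk continuous_id)

/-- The pair rotation is linear and preserves the Euclidean unit ball of `(ℝ²)^N`, which has
positive finite measure; so its Jacobian is `1`. -/
lemma measurePreserving_pairRot (hjk : j ≠ k) (θ : ℝ) :
    MeasurePreserving (pairRot j k θ) (volume : Measure (Fin N → Plane)) volume := by
  have hdet : LinearMap.det (pairRotL j k θ) ≠ 0 := by
    have h : (pairRotL j k θ) ∘ₗ (pairRotL j k (-θ)) = LinearMap.id := by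
      ext1 x
      refine LinearMap.ext fun v => ?_
      show pairRot j k θ (pairRot j k (-θ) _) = _
      rw [pairRot_pairRot hjk, add_neg_cancel, pairRot_zero]
      rfl
    have h2 := congrArg LinearMap.det h
    rw [LinearMap.det_comp, LinearMap.det_id] at h2
    exact left_ne_zero_of_mul_eq_one h2
  have hmap := MeasureTheory.Measure.map_linearMap_addHaar_eq_smul_addHaar
    (volume : Measure (Fin N → Plane)) hdet
  set c := ENNReal.ofReal |(LinearMap.det (pairRotL j k θ))⁻¹|
  have hmeas : Measurable (pairRot j k θ) := (pairRotH hjk θ).continuous.measurable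
  have hmap' : Measure.map (pairRot j k θ) (volume : Measure (Fin N → Plane)) = c • volume := hmap
  let B : Set (Fin N → Plane) := {x | ∑ l, ‖x l‖ ^ 2 < 1}
  have hBo : IsOpen B := isOpen_lt (by fun_prop) continuous_const
  have hB0 : (volume B) ≠ 0 := (hBo.measure_pos _ ⟨0, by simp [B]⟩).ne'
  have hBt : (volume B) ≠ ⊤ := by
    refine ((measure_mono ?_).trans_lt
      (measure_closedBall_lt_top (x := (0 : Fin N → Plane)) (r := 1))).ne
    intro x hx
    rw [mem_closedBall_zero_iff, pi_norm_le_iff_of_nonneg zero_le_one]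
    intro l
    have h1 : ‖x l‖ ^ 2 ≤ ∑ l, ‖x l‖ ^ 2 :=
      Finset.single_le_sum (f := fun l => ‖x l‖ ^ 2) (fun i _ => sq_nonneg _) (Finset.mem_univ l)
    have h2 : ∑ l, ‖x l‖ ^ 2 < 1 := hx
    nlinarith [norm_nonneg (x l)]
  have hinv : pairRot j k θ ⁻¹' B = B := by
    ext x
    show ∑ l, ‖pairRot j k θ x l‖ ^ 2 < 1 ↔ ∑ l, ‖x l‖ ^ 2 < 1
    rw [sum_norm_sq_pairRot hjk]
  have hc : c * volume B = volume B := by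
    have h := congrArg (fun m : Measure (Fin N → Plane) => m B) hmap'
    simp only [Measure.map_apply hmeas hBo.measurableSet, hinv, Measure.smul_apply,
      smul_eq_mul] at h
    exact h.symm
  have hc1 : c = 1 := by
    have : c * volume B = 1 * volume B := by rw [hc, one_mul]
    exact (ENNReal.mul_left_inj hB0 hBt).1 this
  exact ⟨hmeas, by rw [hmap', hc1, one_smul]⟩

/-! ### The flux through an orbit -/

lemma sum_perp_mul_perp (v w : Plane) :
    ∑ i, ((‖w‖ ^ 2)⁻¹ • perp w) i * perp v i = (toC v / toC w).re := by
  rw [Fin.sum_univ_two, plane_norm_sq, Complex.div_re, Complex.normSq_apply]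
  simp only [toC, PiLp.smul_apply, smul_eq_mul, perp_zero', perp_one']
  rw [← pow_two, ← pow_two]
  ring

/-- The angular component of the relative magnetic potential `A_j - A_k`. Each term of the sum is
the derivative of the argument of one of the vectors `x_j - x_l`, `x_k - x_l` under the pair
rotation; the pair itself contributes the constant `1`. -/
lemma flux_eq (hjk : j ≠ k) (x : Fin N → Plane) (hr : rel j k x ≠ 0) :
    ∑ i, (magA 0 x j (x j) i - magA 0 x k (x k) i) * perp (rel j k x) i
      = 1 + ∑ l ∈ (Finset.univ.erase j).erase k,
        ((toC (rel j k x) / (toC (cen j k x - x l) + toC (rel j k x))).re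
          + (-toC (rel j k x) / (toC (cen j k x - x l) + -toC (rel j k x))).re) := by
  have hz : toC (rel j k x) ≠ 0 := fun h => hr (toC_eq_zero.1 h)
  have hA : ∀ a : Fin N, ∑ i, magA 0 x a (x a) i * perp (rel j k x) i
      = ∑ l ∈ Finset.univ.erase a, (toC (rel j k x) / toC (x a - x l)).re := by
    intro a
    simp only [magA, max_eq_left (norm_nonneg _), WithLp.ofLp_sum, Finset.sum_apply,
      Finset.sum_mul]
    rw [Finset.sum_comm]
    exact Finset.sum_congr rfl fun l _ => sum_perp_mul_perp _ _
  simp only [sub_mul, Finset.sum_sub_distrib]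
  rw [hA, hA, ← Finset.add_sum_erase (Finset.univ.erase j) _ (a := k) (by simp [hjk.symm]),
    ← Finset.add_sum_erase (Finset.univ.erase k) _ (a := j) (by simp [hjk]),
    Finset.erase_right_comm (a := k) (b := j)]
  have e1 : toC (x j - x k) = 2 * toC (rel j k x) := by
    apply Complex.ext <;> simp [toC, rel]
  have e2 : toC (x k - x j) = -(2 * toC (rel j k x)) := by
    apply Complex.ext <;> simp [toC, rel]
  have e3 : ∀ l, toC (x j - x l) = toC (cen j k x - x l) + toC (rel j k x) := by
    intro l
    rw [← toC_add]; congr 1; rw [← cen_add_rel (j := j) (k := k) x]; abel_nf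
  have e4 : ∀ l, toC (x k - x l) = toC (cen j k x - x l) + -toC (rel j k x) := by
    intro l
    rw [← toC_neg, ← toC_add]; congr 1
    have h := cen_sub_rel (j := j) (k := k) x
    rw [← h]; abel_nf
  have e5 : (toC (rel j k x) / toC (x j - x k)).re = 1 / 2 := by
    rw [e1, show toC (rel j k x) / (2 * toC (rel j k x)) = ((1 / 2 : ℝ) : ℂ) by
      push_cast; field_simp, Complex.ofReal_re]
  have e6 : (toC (rel j k x) / toC (x k - x j)).re = -(1 / 2) := by
    rw [e2, show toC (rel j k x) / -(2 * toC (rel j k x)) = ((-(1 / 2) : ℝ) : ℂ) by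
      push_cast; field_simp, Complex.ofReal_re]
  rw [e5, e6, Finset.sum_add_distrib]
  simp only [e3, e4, neg_div, Complex.neg_re, Finset.sum_neg_distrib]
  ring

/-- `r` times the component of `(D_j - D_k)Ψ` along the direction of the pair rotation. -/
def angDer (α : ℝ) (Ψ : (Fin N → Plane) → ℂ) (j k : Fin N) (x : Fin N → Plane) : ℂ :=
  ∑ i, (perp (rel j k x) i : ℂ) * (covDer α 0 Ψ j x i - covDer α 0 Ψ k x i)

lemma angDer_eq (α : ℝ) (Ψ : (Fin N → Plane) → ℂ) (x : Fin N → Plane) :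
    angDer α Ψ j k x = -Complex.I * fderiv ℝ Ψ x (pairVel j k x)
      + (α * ∑ i, (magA 0 x j (x j) i - magA 0 x k (x k) i) * perp (rel j k x) i : ℝ) * Ψ x := by
  have hs : ∀ a : Fin N, fderiv ℝ Ψ x (Pi.single a (perp (rel j k x)))
      = ∑ i, (perp (rel j k x) i : ℂ) *
        fderiv ℝ Ψ x (Pi.single a (EuclideanSpace.single i 1)) := by
    intro a
    have h1 : perp (rel j k x) = ∑ i, perp (rel j k x) i • (EuclideanSpace.single i 1 : Plane) := by
      apply plane_ext <;> simp [Fin.sum_univ_two]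
    have h2 : (Pi.single a (perp (rel j k x)) : Fin N → Plane)
        = ∑ i, perp (rel j k x) i •
          (Pi.single a (EuclideanSpace.single i 1 : Plane) : Fin N → Plane) := by
      conv_lhs => rw [h1]
      change singleL a _ = ∑ i, _ • singleL a _
      rw [map_sum]
      simp only [map_smul]
    rw [h2, map_sum]
    simp only [map_smul, Complex.real_smul]
  rw [pairVel, map_sub, hs, hs, angDer]
  simp only [covDer, Fin.sum_univ_two]
  push_cast
  ring

lemma norm_angDer_sq_le (α : ℝ) (Ψ : (Fin N → Plane) → ℂ) (x : Fin N → Plane) :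
    ‖angDer α Ψ j k x‖ ^ 2
      ≤ ‖rel j k x‖ ^ 2 * ∑ i, ‖covDer α 0 Ψ j x i - covDer α 0 Ψ k x i‖ ^ 2 := by
  have h1 : ‖angDer α Ψ j k x‖
      ≤ ∑ i, |perp (rel j k x) i| * ‖covDer α 0 Ψ j x i - covDer α 0 Ψ k x i‖ := by
    refine (norm_sum_le _ _).trans (le_of_eq (Finset.sum_congr rfl fun i _ => ?_))
    rw [norm_mul, Complex.norm_real, Real.norm_eq_abs]
  have h2 := Finset.sum_mul_sq_le_sq_mul_sq Finset.univ (fun i => |perp (rel j k x) i|)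
    (fun i => ‖covDer α 0 Ψ j x i - covDer α 0 Ψ k x i‖)
  have h3 : ∑ i, |perp (rel j k x) i| ^ 2 = ‖rel j k x‖ ^ 2 := by
    rw [Fin.sum_univ_two, plane_norm_sq]; simp; ring
  rw [h3] at h2
  exact (pow_le_pow_left₀ (norm_nonneg _) h1 2).trans h2

/-! ### The inequality on one orbit -/

lemma alphaN_nonneg (α : ℝ) (N : ℕ) : 0 ≤ alphaN α N := by
  refine Real.sInf_nonneg ?_
  rintro t ⟨p, -, q, rfl⟩
  exact abs_nonneg _

lemma alphaN_le (α : ℝ) {N p : ℕ} (hp : p + 1 < N) (q : ℤ) :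
    alphaN α N ≤ |(2 * (p : ℝ) + 1) * α - 2 * (q : ℝ)| := by
  refine csInf_le ⟨0, ?_⟩ ⟨p, hp, q, rfl⟩
  rintro t ⟨p, -, q, rfl⟩
  exact abs_nonneg _

/-- The Hardy inequality on a single orbit of the pair rotation: by symmetry of `Ψ` the half circle
closes up, and the flux through it is `α` times an odd integer `2p + 1`, where `p` is the number of
particles enclosed. -/
lemma pair_circle_ineq (α : ℝ) (Ψ : (Fin N → Plane) → ℂ)
    (hsmooth : ContDiff ℝ (⊤ : ℕ∞) Ψ)
    (hdiag : ∀ x ∈ tsupport Ψ, ∀ j k : Fin N, j ≠ k → x j ≠ x k)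
    (hsym : ∀ (σ : Equiv.Perm (Fin N)) (x : Fin N → Plane), Ψ (x ∘ σ) = Ψ x)
    (hjk : j ≠ k) (x : Fin N → Plane) (hr : rel j k x ≠ 0) :
    alphaN α N ^ 2 * ∫ θ in (0 : ℝ)..π, ‖Ψ (pairRot j k θ x)‖ ^ 2
      ≤ ∫ θ in (0 : ℝ)..π, ‖angDer α Ψ j k (pairRot j k θ x)‖ ^ 2 := by
  have hz : toC (rel j k x) ≠ 0 := fun h => hr (toC_eq_zero.1 h)
  choose g p hp hper hg using fun l => exists_gauge (toC (cen j k x - x l)) (toC (rel j k x)) hz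
  set S := (Finset.univ.erase j).erase k with hS
  set P : ℕ := ∑ l ∈ S, p l with hP
  have hPN : P + 1 < N := by
    have h1 : P ≤ S.card := by
      simpa using Finset.sum_le_card_nsmul S p 1 (fun l _ => hp l)
    rw [hS, Finset.card_erase_of_mem (by simp [hjk.symm]), Finset.card_erase_of_mem (by simp),
      Finset.card_univ, Fintype.card_fin] at h1
    have h2 : (j : ℕ) ≠ k := fun h => hjk (Fin.ext h)
    have := j.2
    have := k.2
    omega
  set G : ℝ → ℝ := fun θ => ∑ l ∈ S, (g l θ + g l (θ + π)) with hG
  set c : ℝ := (2 * (P : ℝ) + 1) * α with hc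
  set T : ℝ → Fin N → Plane := fun θ => pairRot j k θ x with hT
  set v : ℝ → ℂ := fun θ => Ψ (T θ) * Complex.exp (Complex.I * ((α * G θ : ℝ) : ℂ)) with hv
  have hTc : Continuous T := (contDiff_pairRot x).continuous
  -- the potential along the orbit is the constant `c` plus the derivative of the gauge
  have hgood : ∀ θ, (∀ a b, a ≠ b → T θ a ≠ T θ b) → ContDiffAt ℝ (⊤ : ℕ∞) G θ ∧
      HasDerivAt G ((∑ i, (magA 0 (T θ) j (T θ j) i - magA 0 (T θ) k (T θ k) i) *
        perp (rel j k (T θ)) i) - (2 * (P : ℝ) + 1)) θ := by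
    intro θ hd
    have hexp : Complex.exp (((θ + π : ℝ) : ℂ) * Complex.I) = -Complex.exp (θ * Complex.I) := by
      push_cast
      rw [add_mul, Complex.exp_add, Complex.exp_pi_mul_I, mul_neg_one]
    have hrelT : rel j k (T θ) = rot θ (rel j k x) := rel_pairRot hjk θ x
    have hcenT : cen j k (T θ) = cen j k x := cen_pairRot hjk θ x
    have hl : ∀ l ∈ S, l ≠ j ∧ l ≠ k ∧ T θ l = x l := by
      intro l hl
      simp only [hS, Finset.mem_erase, Finset.mem_univ, and_true] at hl
      exact ⟨hl.2, hl.1, pairRot_other hl.2 hl.1 θ x⟩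
    have hsub : ∀ {a b : Plane}, a ≠ b → toC (a - b) ≠ 0 := fun hab h =>
      hab (sub_eq_zero.1 (toC_eq_zero.1 h))
    have h1 : ∀ l ∈ S, toC (cen j k x - x l) + Complex.exp (θ * Complex.I) * toC (rel j k x)
        ≠ 0 := by
      intro l hlS
      obtain ⟨hlj, -, hTl⟩ := hl l hlS
      have := hsub (hd j l hlj.symm)
      rw [hTl, hT] at this
      simp only [pairRot_left hjk] at this
      rw [← toC_rot, ← toC_add]
      convert this using 2
      abel
    have h2 : ∀ l ∈ S, toC (cen j k x - x l)
        + Complex.exp (((θ + π : ℝ) : ℂ) * Complex.I) * toC (rel j k x) ≠ 0 := by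
      intro l hlS
      obtain ⟨-, hlk, hTl⟩ := hl l hlS
      have := hsub (hd k l hlk.symm)
      rw [hTl, hT] at this
      simp only [pairRot_right hjk] at this
      rw [hexp, neg_mul, ← toC_rot, ← toC_neg, ← toC_add]
      convert this using 2
      abel
    refine ⟨ContDiffAt.sum fun l hlS => ((hg l θ (h1 l hlS)).1).add
      ((hg l _ (h2 l hlS)).1.comp θ (contDiffAt_id.add contDiffAt_const)), ?_⟩
    have h3 := HasDerivAt.fun_sum (u := S) fun l hlS => ((hg l θ (h1 l hlS)).2).add
      ((hg l _ (h2 l hlS)).2.comp_add_const θ π)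
    refine h3.congr_deriv ?_
    have hr' : rel j k (T θ) ≠ 0 := by
      rw [hrelT, ← norm_ne_zero_iff, norm_rot, norm_ne_zero_iff]; exact hr
    rw [flux_eq hjk (T θ) hr', hrelT, hcenT, hP]
    push_cast
    have hlin : ∀ a b : ℝ, 1 + a - (b + 1) = a - b := fun a b => by ring
    rw [hlin, Finset.mul_sum, ← Finset.sum_sub_distrib]
    refine Finset.sum_congr rfl fun l hlS => ?_
    rw [(hl l hlS).2.2, toC_rot]
    rw [Complex.ofReal_add] at hexp
    rw [hexp, neg_mul]
    ring
  -- `G` may be irregular at collisions, but `Ψ` vanishes near those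
  have hcase : ∀ θ, (∀ a b, a ≠ b → T θ a ≠ T θ b) ∨ Ψ =ᶠ[nhds (T θ)] 0 := by
    intro θ
    by_cases h : T θ ∈ tsupport Ψ
    · exact Or.inl (hdiag _ h)
    · exact Or.inr (notMem_tsupport_iff_eventuallyEq.1 h)
  have hv0 : ∀ θ, Ψ =ᶠ[nhds (T θ)] 0 → v =ᶠ[nhds θ] fun _ => 0 := by
    intro θ h
    filter_upwards [hTc.continuousAt.eventually h] with t ht
    simp [hv, ht]
  have hvC : ContDiff ℝ (⊤ : ℕ∞) v := by
    rw [contDiff_iff_contDiffAt]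
    intro θ
    rcases hcase θ with h | h
    · have hG1 := (hgood θ h).1
      refine ((hsmooth.comp (contDiff_pairRot x)).contDiffAt).mul ?_
      exact (contDiffAt_const.mul
        ((Complex.ofRealCLM.contDiff.contDiffAt).comp θ (contDiffAt_const.mul hG1))).cexp
    · exact contDiffAt_const.congr_of_eventuallyEq (hv0 θ h)
  have hvd : ∀ θ, HasDerivAt v (deriv v θ) θ := fun θ =>
    ((hvC.differentiable (by simp)) θ).hasDerivAt
  -- the half turn exchanges the two particles, and the gauge takes the same value at both ends
  have hvper : v π = v 0 := by
    have h1 : T π = T 0 ∘ Equiv.swap j k := by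
      simp only [hT]; rw [pairRot_zero, pairRot_pi hjk]
    have h2 : G π = G 0 := by
      refine Finset.sum_congr rfl fun l _ => ?_
      have := hper l 0
      rw [zero_add] at this ⊢
      rw [← two_mul, this, add_comm]
    simp only [hv, h1, hsym, h2]
  have hcirc := circle_ineq hvd (hvC.continuous_deriv (by simp)) hvper c (alphaN α N)
    (alphaN_nonneg α N) (fun q => alphaN_le α hPN q)
  have hnexp : ∀ t : ℝ, ‖Complex.exp (Complex.I * (t : ℂ))‖ = 1 := fun t => by
    rw [mul_comm]; exact Complex.norm_exp_ofReal_mul_I t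
  have e1 : ∀ θ, ‖v θ‖ ^ 2 = ‖Ψ (T θ)‖ ^ 2 := fun θ => by
    simp only [hv, norm_mul, hnexp, mul_one]
  have e2 : ∀ θ, ‖deriv v θ + Complex.I * c * v θ‖ ^ 2 = ‖angDer α Ψ j k (T θ)‖ ^ 2 := by
    intro θ
    rcases hcase θ with h | h
    · have hG2 := (hgood θ h).2
      have hΨ : HasDerivAt (fun t => Ψ (T t)) (fderiv ℝ Ψ (T θ) (pairVel j k (T θ))) θ :=
        ((hsmooth.differentiable (by simp)) (T θ)).hasFDerivAt.comp_hasDerivAt θ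
          (hasDerivAt_pairRot hjk x θ)
      have hE := (((hG2.const_mul α).ofReal_comp).const_mul Complex.I).cexp
      have hD := (hΨ.mul hE).deriv
      rw [show deriv v θ = _ from hD, angDer_eq]
      set F := ∑ i, (magA 0 (T θ) j (T θ j) i - magA 0 (T θ) k (T θ k) i) *
        perp (rel j k (T θ)) i
      have : fderiv ℝ Ψ (T θ) (pairVel j k (T θ)) * Complex.exp (Complex.I * ((α * G θ : ℝ) : ℂ))
          + Ψ (T θ) * (Complex.exp (Complex.I * ((α * G θ : ℝ) : ℂ)) *
            (Complex.I * ((α * (F - (2 * (P : ℝ) + 1)) : ℝ) : ℂ))) + Complex.I * c * v θ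
          = Complex.I * (-Complex.I * fderiv ℝ Ψ (T θ) (pairVel j k (T θ))
            + ((α * F : ℝ) : ℂ) * Ψ (T θ)) * Complex.exp (Complex.I * ((α * G θ : ℝ) : ℂ)) := by
        simp only [hv, hc]
        push_cast
        linear_combination (fderiv ℝ Ψ (T θ) (pairVel j k (T θ)) *
          Complex.exp (Complex.I * (α * G θ))) * (Complex.I_mul_I)
      rw [this, norm_mul, norm_mul, hnexp, Complex.norm_I, one_mul, mul_one]
    · have h1 : deriv v θ = 0 := by rw [(hv0 θ h).deriv_eq]; simp
      have h2 : v θ = 0 := (hv0 θ h).eq_of_nhds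
      have h3 : fderiv ℝ Ψ (T θ) = 0 := by rw [h.fderiv_eq]; simp
      have h4 : Ψ (T θ) = 0 := h.eq_of_nhds
      rw [angDer_eq, h1, h2, h3, h4]; simp
  simp only [e1, e2] at hcirc
  exact hcirc

/-! ### Averaging over orbits -/

/-- Averaging over the rotations of the pair: an invariant set `E` sees the same integral of `F`
and of its mean over half an orbit. -/
lemma avg_eq (hjk : j ≠ k) {F : (Fin N → Plane) → ℝ} (hF : Continuous F)
    (hFs : HasCompactSupport F) {E : Set (Fin N → Plane)}
    (hE : ∀ θ x, pairRot j k θ x ∈ E ↔ x ∈ E) :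
    Integrable (fun x => ∫ θ in (0 : ℝ)..π, F (pairRot j k θ x)) (volume.restrict E) ∧
      ∫ x in E, ∫ θ in (0 : ℝ)..π, F (pairRot j k θ x) = π * ∫ x in E, F x := by
  have hpre : ∀ θ, pairRot j k θ ⁻¹' E = E := fun θ => Set.ext fun x => hE θ x
  have hconst : ∀ (H : (Fin N → Plane) → ℝ) (θ : ℝ),
      ∫ x in E, H (pairRot j k θ x) = ∫ x in E, H x := by
    intro H θ
    have := (measurePreserving_pairRot hjk θ).setIntegral_preimage_emb
      (pairRotH hjk θ).measurableEmbedding H E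
    rwa [hpre] at this
  have hcont : Continuous fun q : ℝ × (Fin N → Plane) => F (pairRot j k q.1 q.2) :=
    hF.comp continuous_pairRot
  have hint : Integrable (fun q : ℝ × (Fin N → Plane) => F (pairRot j k q.1 q.2))
      ((volume.restrict (Set.Ioc 0 π)).prod (volume.restrict E)) := by
    rw [integrable_prod_iff hcont.aestronglyMeasurable]
    constructor
    · refine Filter.Eventually.of_forall fun θ => Integrable.restrict ?_
      exact (hF.comp (pairRotH hjk θ).continuous).integrable_of_hasCompactSupport
        (hFs.comp_homeomorph (pairRotH hjk θ))
    · have : (fun θ : ℝ => ∫ x in E, ‖F (pairRot j k θ x)‖) = fun _ => ∫ x in E, ‖F x‖ := by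
        funext θ
        exact hconst (fun x => ‖F x‖) θ
      rw [this]
      exact integrable_const _
  constructor
  · simp only [intervalIntegral.integral_of_le pi_pos.le]
    exact hint.integral_prod_right
  · simp only [intervalIntegral.integral_of_le pi_pos.le]
    rw [← integral_integral_swap (f := fun θ x => F (pairRot j k θ x)) hint]
    simp only [hconst]
    simp [pi_pos.le]

/-- An inequality between half-orbit means implies the inequality between the integrals over an
invariant set. -/
lemma avg_le (hjk : j ≠ k) {F₁ F₂ : (Fin N → Plane) → ℝ} (h₁ : Continuous F₁)
    (hs₁ : HasCompactSupport F₁) (h₂ : Continuous F₂) (hs₂ : HasCompactSupport F₂)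
    {E : Set (Fin N → Plane)} (hE : ∀ θ x, pairRot j k θ x ∈ E ↔ x ∈ E) {ρ : ℝ}
    (h : ∀ x, ρ * ∫ θ in (0 : ℝ)..π, F₁ (pairRot j k θ x)
      ≤ ∫ θ in (0 : ℝ)..π, F₂ (pairRot j k θ x)) :
    ρ * ∫ x in E, F₁ x ≤ ∫ x in E, F₂ x := by
  obtain ⟨i₁, e₁⟩ := avg_eq hjk h₁ hs₁ hE
  obtain ⟨i₂, e₂⟩ := avg_eq hjk h₂ hs₂ hE
  have := integral_mono (i₁.const_mul ρ) i₂ h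
  rw [integral_const_mul, e₁, e₂] at this
  refine le_of_mul_le_mul_left ?_ pi_pos
  linarith

/-- A quantity that is continuous at collision-free configurations and vanishes off the support
of `Ψ` is continuous. -/
lemma continuous_of_dichotomy {M : Type*} [TopologicalSpace M] [Zero M]
    {Ψ : (Fin N → Plane) → ℂ}
    (hdiag : ∀ x ∈ tsupport Ψ, ∀ j k : Fin N, j ≠ k → x j ≠ x k)
    {f : (Fin N → Plane) → M}
    (h1 : ∀ x : Fin N → Plane, (∀ j k, j ≠ k → x j ≠ x k) → ContinuousAt f x)
    (h2 : ∀ x, x ∉ tsupport Ψ → f x = 0) : Continuous f := by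
  rw [continuous_iff_continuousAt]
  intro x
  by_cases hx : x ∈ tsupport Ψ
  · exact h1 x (hdiag x hx)
  · have : f =ᶠ[nhds x] fun _ => 0 := by
      filter_upwards [(isClosed_tsupport Ψ).isOpen_compl.mem_nhds hx] with y hy
      exact h2 y hy
    exact continuousAt_const.congr this.symm

lemma covDer_eq_zero (α : ℝ) {Ψ : (Fin N → Plane) → ℂ} (j : Fin N) {x : Fin N → Plane}
    (hx : x ∉ tsupport Ψ) (i : Fin 2) : covDer α 0 Ψ j x i = 0 := by
  have h := notMem_tsupport_iff_eventuallyEq.1 hx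
  have h3 : fderiv ℝ Ψ x = 0 := by rw [h.fderiv_eq]; simp
  have h4 : Ψ x = 0 := h.eq_of_nhds
  simp [covDer, h3, h4]

lemma continuous_covDer (α : ℝ) {Ψ : (Fin N → Plane) → ℂ}
    (hsmooth : ContDiff ℝ (⊤ : ℕ∞) Ψ)
    (hdiag : ∀ x ∈ tsupport Ψ, ∀ j k : Fin N, j ≠ k → x j ≠ x k) (j : Fin N) (i : Fin 2) :
    Continuous fun x => covDer α 0 Ψ j x i := by
  refine continuous_of_dichotomy hdiag (fun x hx => ?_) fun x hx => covDer_eq_zero α j hx i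
  have hA : ContinuousAt (fun x : Fin N → Plane => magA 0 x j (x j)) x := by
    simp only [magA, max_eq_left (norm_nonneg _)]
    refine tendsto_finsetSum _ fun l hl => ?_
    have hlj : j ≠ l := (Finset.ne_of_mem_erase hl).symm
    have hsub : Continuous fun y : Fin N → Plane => y j - y l :=
      (continuous_apply j).sub (continuous_apply l)
    refine ContinuousAt.smul (ContinuousAt.inv₀ (hsub.norm.pow 2).continuousAt ?_)
      (continuous_perp.comp hsub).continuousAt
    exact pow_ne_zero 2 (norm_ne_zero_iff.2 (sub_ne_zero.2 (hx j l hlj)))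
  have hA' : ContinuousAt (fun x : Fin N → Plane => magA 0 x j (x j) i) x :=
    (EuclideanSpace.proj (𝕜 := ℝ) i).continuous.continuousAt.comp hA
  have hD : Continuous fun x => fderiv ℝ Ψ x (Pi.single j (EuclideanSpace.single i 1)) :=
    (hsmooth.continuous_fderiv (by simp)).clm_apply continuous_const
  simp only [covDer]
  exact (continuousAt_const.mul hD.continuousAt).add
    ((continuousAt_const.mul (Complex.continuous_ofReal.continuousAt.comp hA')).mul
      hsmooth.continuous.continuousAt)

/-- The relative kinetic energy `‖(D_j - D_k)Ψ‖²` of a pair. -/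
def relEnergy (α : ℝ) (Ψ : (Fin N → Plane) → ℂ) (j k : Fin N) (x : Fin N → Plane) : ℝ :=
  ∑ i : Fin 2, ‖covDer α 0 Ψ j x i - covDer α 0 Ψ k x i‖ ^ 2

lemma relEnergy_nonneg (α : ℝ) (Ψ : (Fin N → Plane) → ℂ) (x : Fin N → Plane) :
    0 ≤ relEnergy α Ψ j k x := Finset.sum_nonneg fun i _ => by positivity

lemma continuous_relEnergy (α : ℝ) {Ψ : (Fin N → Plane) → ℂ}
    (hsmooth : ContDiff ℝ (⊤ : ℕ∞) Ψ)
    (hdiag : ∀ x ∈ tsupport Ψ, ∀ j k : Fin N, j ≠ k → x j ≠ x k) :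
    Continuous (relEnergy α Ψ j k) :=
  continuous_finsetSum _ fun i _ => (((continuous_covDer α hsmooth hdiag j i).sub
    (continuous_covDer α hsmooth hdiag k i)).norm.pow 2)

lemma hasCompactSupport_relEnergy (α : ℝ) {Ψ : (Fin N → Plane) → ℂ}
    (hsupp : HasCompactSupport Ψ) : HasCompactSupport (relEnergy α Ψ j k) :=
  HasCompactSupport.intro hsupp fun x hx => by simp [relEnergy, covDer_eq_zero α _ hx]

/-- The Hardy inequality for one pair on a set invariant under the rotations of that pair. -/
lemma pair_hardy (α : ℝ) {Ψ : (Fin N → Plane) → ℂ}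
    (hsmooth : ContDiff ℝ (⊤ : ℕ∞) Ψ) (hsupp : HasCompactSupport Ψ)
    (hdiag : ∀ x ∈ tsupport Ψ, ∀ j k : Fin N, j ≠ k → x j ≠ x k)
    (hsym : ∀ (σ : Equiv.Perm (Fin N)) (x : Fin N → Plane), Ψ (x ∘ σ) = Ψ x)
    (hjk : j ≠ k) {E : Set (Fin N → Plane)} (hE : ∀ θ x, pairRot j k θ x ∈ E ↔ x ∈ E) :
    alphaN α N ^ 2 * ∫ x in E, ‖Ψ x‖ ^ 2 / ‖rel j k x‖ ^ 2 ≤ ∫ x in E, relEnergy α Ψ j k x := by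
  have hΨ0 : ∀ x, x ∉ tsupport Ψ → ‖Ψ x‖ ^ 2 / ‖rel j k x‖ ^ 2 = 0 := fun x hx => by
    simp [image_eq_zero_of_notMem_tsupport hx]
  refine avg_le hjk (continuous_of_dichotomy hdiag (fun x hx => ?_) hΨ0)
    (HasCompactSupport.intro hsupp hΨ0) (continuous_relEnergy α hsmooth hdiag)
    (hasCompactSupport_relEnergy α hsupp) hE fun x => ?_
  · refine (hsmooth.continuous.norm.pow 2).continuousAt.div
      (continuous_rel.norm.pow 2).continuousAt (pow_ne_zero 2 (norm_ne_zero_iff.2 ?_))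
    exact smul_ne_zero (by norm_num) (sub_ne_zero.2 (hx j k hjk))
  have hn : ∀ θ, ‖rel j k (pairRot j k θ x)‖ = ‖rel j k x‖ := fun θ => by
    rw [rel_pairRot hjk, norm_rot]
  have hT : Continuous fun θ => pairRot j k θ x := (contDiff_pairRot x).continuous
  have hRE : Continuous fun θ => relEnergy α Ψ j k (pairRot j k θ x) :=
    (continuous_relEnergy α hsmooth hdiag).comp hT
  simp only [hn]
  -- at a collision of the pair the left side is `0`, by the convention for division by zero
  by_cases hr : rel j k x = 0
  · simp only [hr, norm_zero, ne_eq, OfNat.ofNat_ne_zero, not_false_eq_true, zero_pow, div_zero,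
      intervalIntegral.integral_zero, mul_zero]
    exact intervalIntegral.integral_nonneg pi_pos.le fun θ _ => relEnergy_nonneg α Ψ _
  have hpos : 0 < ‖rel j k x‖ ^ 2 := by have := norm_pos_iff.2 hr; positivity
  rw [intervalIntegral.integral_div, ← mul_div_assoc, div_le_iff₀ hpos, mul_comm (∫ _ in _.._, _),
    ← intervalIntegral.integral_const_mul (‖rel j k x‖ ^ 2)]
  refine (pair_circle_ineq α Ψ hsmooth hdiag hsym hjk x hr).trans ?_
  have hang : Continuous fun x => angDer α Ψ j k x := by
    refine continuous_finsetSum _ fun i _ => Continuous.mul ?_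
      ((continuous_covDer α hsmooth hdiag j i).sub (continuous_covDer α hsmooth hdiag k i))
    exact Complex.continuous_ofReal.comp ((EuclideanSpace.proj (𝕜 := ℝ) i).continuous.comp
      (continuous_perp.comp continuous_rel))
  refine intervalIntegral.integral_mono pi_pos.le
    (((hang.comp hT).norm.pow 2).intervalIntegrable _ _)
    ((continuous_const.mul hRE).intervalIntegrable _ _) fun θ => ?_
  have := norm_angDer_sq_le (j := j) (k := k) α Ψ (pairRot j k θ x)
  rw [hn] at this
  exact this

/-! ### The domain of a pair -/

/-- The configurations in `Ω^N` with `r_jk < δ(X_jk)`. As in the indicator of the inequality,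
`δ = 0` if `Ω` has no boundary, and the set is then empty. -/
def pairSet (Ω : Set Plane) (j k : Fin N) : Set (Fin N → Plane) :=
  {x | x ∈ Set.univ.pi (fun _ : Fin N => Ω) ∧
    ‖rel j k x‖ < Metric.infDist (cen j k x) (frontier Ω)}

lemma measurableSet_pairCond (Ω : Set Plane) : MeasurableSet
    {x : Fin N → Plane | ‖rel j k x‖ < Metric.infDist (cen j k x) (frontier Ω)} :=
  (isOpen_lt continuous_rel.norm
    ((Metric.continuous_infDist_pt _).comp continuous_cen)).measurableSet

lemma ball_infDist_frontier_subset {Ω : Set Plane} (hΩ : IsOpen Ω) {c : Plane} (hc : c ∈ Ω) :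
    Metric.ball c (Metric.infDist c (frontier Ω)) ⊆ Ω := by
  rcases le_or_gt (Metric.infDist c (frontier Ω)) 0 with h | h
  · rw [Metric.ball_eq_empty.2 h]; exact empty_subset _
  refine (convex_ball c _).isPreconnected.subset_left_of_subset_union hΩ
    isClosed_closure.isOpen_compl
    (disjoint_compl_right.mono_left subset_closure) ?_ ⟨c, Metric.mem_ball_self h, hc⟩
  intro y hy
  by_contra hcon
  simp only [mem_union, mem_compl_iff, not_or, not_not] at hcon
  refine Set.disjoint_left.1 Metric.disjoint_ball_infDist hy ?_
  rw [hΩ.frontier_eq]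
  exact ⟨hcon.2, hcon.1⟩

/-- The only place where convexity of `Ω` is used: the midpoint of the pair lies in `Ω`. -/
lemma pairRot_mem_pairSet {Ω : Set Plane} (hΩ : IsOpen Ω) (hΩc : Convex ℝ Ω) (hjk : j ≠ k)
    (θ : ℝ) (x : Fin N → Plane) : pairRot j k θ x ∈ pairSet Ω j k ↔ x ∈ pairSet Ω j k := by
  have key : ∀ θ (x : Fin N → Plane), x ∈ pairSet Ω j k → pairRot j k θ x ∈ pairSet Ω j k := by
    rintro θ x ⟨hx, hlt⟩
    have hx' : ∀ l, x l ∈ Ω := fun l => hx l (mem_univ _)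
    have hc : cen j k x ∈ Ω := by
      have := hΩc (hx' j) (hx' k) (by norm_num : (0 : ℝ) ≤ 2⁻¹) (by norm_num : (0 : ℝ) ≤ 2⁻¹)
        (by norm_num)
      rwa [← smul_add] at this
    have hball := ball_infDist_frontier_subset hΩ hc
    refine ⟨fun l _ => ?_, ?_⟩
    · by_cases hlj : l = j
      · subst hlj
        rw [pairRot_left hjk]
        apply hball
        rw [mem_ball_iff_norm, add_sub_cancel_left, norm_rot]
        exact hlt
      by_cases hlk : l = k
      · subst hlk
        rw [pairRot_right hjk]
        apply hball
        rw [mem_ball_iff_norm, sub_sub_cancel_left, norm_neg, norm_rot]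
        exact hlt
      · rw [pairRot_other hlj hlk]
        exact hx' l
    · rw [rel_pairRot hjk, cen_pairRot hjk, norm_rot]
      exact hlt
  refine ⟨fun h => ?_, key θ x⟩
  have := key (-θ) _ h
  rwa [pairRot_pairRot hjk, neg_add_cancel, pairRot_zero] at this

/-! ### Summation over pairs -/

lemma sum_sq_sub_le (a : Fin N → ℝ) :
    ∑ j, ∑ k ∈ Finset.Ioi j, (a j - a k) ^ 2 ≤ N * ∑ j, a j ^ 2 := by
  have h1 : ∑ j, ∑ k ∈ Finset.Ioi j, (a j - a k) ^ 2
      = ∑ j, ∑ k ∈ ({j}ᶜ : Finset (Fin N)), (a k - a j) ^ 2 / 2 := by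
    rw [← Finset.sum_sum_Ioi_add_eq_sum_sum_off_diag (fun j k => (a j - a k) ^ 2 / 2)]
    refine Finset.sum_congr rfl fun j _ => Finset.sum_congr rfl fun k _ => ?_
    ring
  have h2 : ∀ j, ∑ k ∈ ({j}ᶜ : Finset (Fin N)), (a k - a j) ^ 2 / 2
      = ∑ k, (a k - a j) ^ 2 / 2 := fun j => by
    rw [← Finset.sum_compl_add_sum {j}]; simp
  have h3 : ∑ j, ∑ k, (a k - a j) ^ 2 / 2 = N * ∑ j, a j ^ 2 - (∑ j, a j) ^ 2 := by
    have : ∀ j k, (a k - a j) ^ 2 / 2 = a k ^ 2 / 2 + a j ^ 2 / 2 - a j * a k := fun j k => by ring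
    simp only [this, Finset.sum_sub_distrib, Finset.sum_add_distrib, ← Finset.mul_sum,
      ← Finset.sum_mul, ← Finset.sum_div, Finset.sum_const, Finset.card_univ, Fintype.card_fin,
      nsmul_eq_mul]
    ring
  rw [h1]
  simp only [h2, h3]
  nlinarith [sq_nonneg (∑ j, a j)]

/-- The parallelogram identity: the total kinetic energy dominates the mean of the relative ones;
the deficit is the energy of the centre of mass. -/
lemma sum_relEnergy_le (α : ℝ) (Ψ : (Fin N → Plane) → ℂ) (x : Fin N → Plane) :
    ∑ j, ∑ k ∈ Finset.Ioi j, relEnergy α Ψ j k x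
      ≤ N * ∑ j, ∑ i : Fin 2, ‖covDer α 0 Ψ j x i‖ ^ 2 := by
  have hn : ∀ z : ℂ, ‖z‖ ^ 2 = z.re ^ 2 + z.im ^ 2 := fun z => by
    rw [← Complex.normSq_eq_norm_sq, Complex.normSq_apply]; ring
  simp only [relEnergy, Fin.sum_univ_two, hn, Complex.sub_re, Complex.sub_im,
    Finset.sum_add_distrib]
  have h := fun i => sum_sq_sub_le fun j => (covDer α 0 Ψ j x i).re
  have h' := fun i => sum_sq_sub_le fun j => (covDer α 0 Ψ j x i).im
  linarith [h 0, h 1, h' 0, h' 1]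

end

/-- **Local many-particle magnetic Hardy inequality for ideal anyons** (Theorem 1.2).
For `α ∈ ℝ`, `R = 0`, `N ≥ 1`, `Ω ⊆ ℝ²` open and convex, and every smooth compactly
supported symmetric `Ψ` vanishing near the fat diagonal,
`Σ_j ∫_{Ω^N} |D_jΨ|² ≥ (α_N²/N) Σ_{j<k} ∫_{Ω^N} |Ψ|² r_jk⁻² 1_{B_{δ(X_jk)}(0)}(r_jk)`. -/
theorem ideal_anyon_local_hardy
    (α : ℝ) (N : ℕ) (hN : 1 ≤ N)
    (Ω : Set Plane) (hΩopen : IsOpen Ω) (hΩconv : Convex ℝ Ω)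
    (Ψ : (Fin N → Plane) → ℂ)
    (hsmooth : ContDiff ℝ (⊤ : ℕ∞) Ψ) (hsupp : HasCompactSupport Ψ)
    (hdiag : ∀ x ∈ tsupport Ψ, ∀ j k : Fin N, j ≠ k → x j ≠ x k)
    (hsym : ∀ (σ : Equiv.Perm (Fin N)) (x : Fin N → Plane), Ψ (x ∘ σ) = Ψ x) :
    alphaN α N ^ 2 / N * ∑ j : Fin N, ∑ k ∈ Finset.Ioi j,
        ∫ x in Set.univ.pi fun _ : Fin N => Ω,
          (if ‖(2:ℝ)⁻¹ • (x j - x k)‖ <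
               Metric.infDist ((2:ℝ)⁻¹ • (x j + x k)) (frontier Ω) then
            ‖Ψ x‖ ^ 2 / ‖(2:ℝ)⁻¹ • (x j - x k)‖ ^ 2 else 0)
    ≤ ∑ j : Fin N, ∫ x in Set.univ.pi fun _ : Fin N => Ω,
        ∑ i : Fin 2, ‖covDer α 0 Ψ j x i‖ ^ 2 := by
  have hN0 : (0 : ℝ) < N := by exact_mod_cast hN
  set V : Set (Fin N → Plane) := Set.univ.pi fun _ : Fin N => Ω with hV
  have hpair : ∀ j k : Fin N, j ≠ k →
      alphaN α N ^ 2 * ∫ x in V,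
          (if ‖(2:ℝ)⁻¹ • (x j - x k)‖ <
               Metric.infDist ((2:ℝ)⁻¹ • (x j + x k)) (frontier Ω) then
            ‖Ψ x‖ ^ 2 / ‖(2:ℝ)⁻¹ • (x j - x k)‖ ^ 2 else 0)
        ≤ ∫ x in V, relEnergy α Ψ j k x := by
    intro j k hjk
    have e1 : ∫ x in V,
          (if ‖(2:ℝ)⁻¹ • (x j - x k)‖ <
               Metric.infDist ((2:ℝ)⁻¹ • (x j + x k)) (frontier Ω) then
            ‖Ψ x‖ ^ 2 / ‖(2:ℝ)⁻¹ • (x j - x k)‖ ^ 2 else 0)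
        = ∫ x in pairSet Ω j k, ‖Ψ x‖ ^ 2 / ‖rel j k x‖ ^ 2 :=
      setIntegral_indicator (s := V) (f := fun x => ‖Ψ x‖ ^ 2 / ‖rel j k x‖ ^ 2)
        (measurableSet_pairCond (j := j) (k := k) Ω)
    rw [e1]
    refine (pair_hardy α hsmooth hsupp hdiag hsym hjk
      (pairRot_mem_pairSet hΩopen hΩconv hjk)).trans ?_
    refine setIntegral_mono_set ?_ (Filter.Eventually.of_forall fun x => relEnergy_nonneg α Ψ x)
      (Filter.Eventually.of_forall fun x hx => hx.1)
    exact ((continuous_relEnergy α hsmooth hdiag).integrable_of_hasCompactSupport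
      (hasCompactSupport_relEnergy α hsupp)).integrableOn
  have hRint : ∀ j k : Fin N, Integrable (relEnergy α Ψ j k) (volume.restrict V) := fun j k =>
    ((continuous_relEnergy α hsmooth hdiag).integrable_of_hasCompactSupport
      (hasCompactSupport_relEnergy α hsupp)).restrict
  have hDint : ∀ j : Fin N, Integrable (fun x => ∑ i : Fin 2, ‖covDer α 0 Ψ j x i‖ ^ 2)
      (volume.restrict V) := fun j => by
    refine Integrable.restrict (Continuous.integrable_of_hasCompactSupport
      (continuous_finsetSum _ fun i _ => (continuous_covDer α hsmooth hdiag j i).norm.pow 2)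
      (HasCompactSupport.intro hsupp fun x hx => ?_))
    simp [covDer_eq_zero α j hx]
  have hsum : ∑ j : Fin N, ∑ k ∈ Finset.Ioi j, ∫ x in V, relEnergy α Ψ j k x
      ≤ N * ∑ j : Fin N, ∫ x in V, ∑ i : Fin 2, ‖covDer α 0 Ψ j x i‖ ^ 2 := by
    rw [← integral_finsetSum _ fun j _ => hDint j, ← integral_const_mul]
    rw [Finset.sum_congr rfl fun j _ => (integral_finsetSum (Finset.Ioi j)
      fun k _ => hRint j k).symm, ← integral_finsetSum _ fun j _ =>
        integrable_finsetSum _ fun k _ => hRint j k]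
    exact integral_mono (integrable_finsetSum _ fun j _ =>
      integrable_finsetSum _ fun k _ => hRint j k)
      ((integrable_finsetSum _ fun j _ => hDint j).const_mul _)
      fun x => sum_relEnergy_le α Ψ x
  rw [div_mul_eq_mul_div, div_le_iff₀ hN0, mul_comm _ (N : ℝ)]
  refine le_trans ?_ hsum
  rw [Finset.mul_sum]
  refine Finset.sum_le_sum fun j _ => ?_
  rw [Finset.mul_sum]
  exact Finset.sum_le_sum fun k hk => hpair j k (Finset.mem_Ioi.1 hk).ne
end
end
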